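/- Let p ≥ 1 be an integer and a > 2p a real number. Assume (ε_n) is a martingale difference sequence with E[ε_{n+1}² | F_n] = σ² a.s. for all n and sup_{n≥0} E[|ε_{n+1}|^a | F_n] < ∞ a.s. Assume the explosion coefficient f_n tends to zero a.s. and that there exists a positive random sequence (α_n) increasing to infinity and a symmetric positive definite d×d matrix L such that S_n/α_n → L a.s. Set a_n(1) = M_n^t S_{n-1}^{-1} M_n − M_n^t S_n^{-1} M_n. Then almost surely lim_{n→∞} (1/log d_n) Σ_{k=1}^n (a_k(1))^p equals σ² if p = 1 and equals 0 if p > 1. -/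

import Mathlib

open MeasureTheory ProbabilityTheory Filter Finset Matrix Topology

noncomputable section

/-- `S_n = S + ∑_{k=0}^n Φ_k Φ_kᵗ`. -/
def Smat {Ω : Type*} {d : ℕ} (S : Matrix (Fin d) (Fin d) ℝ)
    (Φ : ℕ → Ω → Fin d → ℝ) (n : ℕ) (ω : Ω) : Matrix (Fin d) (Fin d) ℝ :=
  S + ∑ k ∈ Finset.range (n + 1), vecMulVec (Φ k ω) (Φ k ω)

/-- The explosion coefficient `f_n = Φ_nᵗ S_n⁻¹ Φ_n`. -/
def expl {Ω : Type*} {d : ℕ} (S : Matrix (Fin d) (Fin d) ℝ)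
    (Φ : ℕ → Ω → Fin d → ℝ) (n : ℕ) (ω : Ω) : ℝ :=
  Φ n ω ⬝ᵥ ((Smat S Φ n ω)⁻¹ *ᵥ Φ n ω)

/-- The vector martingale transform `M_n = M_0 + ∑_{k=1}^n Φ_{k-1} ε_k`. -/
def Mart {Ω : Type*} {d : ℕ} (M0 : Ω → Fin d → ℝ) (Φ : ℕ → Ω → Fin d → ℝ)
    (ε : ℕ → Ω → ℝ) (n : ℕ) (ω : Ω) : Fin d → ℝ :=
  M0 ω + ∑ k ∈ Finset.range n, ε (k + 1) ω • Φ k ω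

/-- `ℓ(p) = d σ^{2p} ∏_{j=1}^{p-1} (d + 2j)`. -/
def elllim (d p : ℕ) (σ : ℝ) : ℝ :=
  (d : ℝ) * σ ^ (2 * p) * ∏ j ∈ Finset.Icc 1 (p - 1), ((d : ℝ) + 2 * (j : ℝ))

/-! ### deterministic inequalities -/

lemma aux_exp_bound {q t : ℝ} (hq : 1 ≤ q) (ht : |q * t| ≤ 1) (h1 : 0 < 1 + t) :
    (1 + t) ^ q ≤ 1 + q * t + (q * t) ^ 2 := by
  have h2 : (1 + t) ^ q ≤ Real.exp (q * t) := by
    rw [Real.rpow_def_of_pos h1]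
    apply Real.exp_le_exp.2
    have := Real.log_le_sub_one_of_pos h1
    nlinarith
  have h3 := (abs_le.1 (Real.abs_exp_sub_one_sub_id_le ht)).2
  linarith

lemma aux_scalar {r : ℝ} (hr : 1 < r) (hr2 : r ≤ 2) : ∃ C : ℝ, 0 ≤ C ∧ ∀ x y : ℝ,
    |x + y| ^ r ≤ |x| ^ r + r * (|x| ^ r / x) * y + C * |y| ^ r := by
  refine ⟨(1 + r) ^ r + r * r ^ (r - 1) + r ^ 2, by positivity, fun x y => ?_⟩
  have hy : 0 ≤ |y| ^ r := by positivity
  have hx : 0 ≤ |x| ^ r := by positivity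
  rcases le_or_gt |x| (r * |y|) with h | h
  · have h1 : |x + y| ^ r ≤ (1 + r) ^ r * |y| ^ r := by
      rw [← Real.mul_rpow (by positivity) (by positivity)]
      apply Real.rpow_le_rpow (by positivity) _ (by linarith)
      have := abs_add_le x y
      linarith
    have h2 : |(|x| ^ r / x) * y| ≤ r ^ (r - 1) * |y| ^ r := by
      rcases eq_or_ne x 0 with rfl | hx0
      · simp; positivity
      · have hxp : 0 < |x| := abs_pos.2 hx0
        rw [abs_mul, abs_div, abs_of_nonneg hx]
        have e1 : |x| ^ r / |x| = |x| ^ (r - 1) := by rw [Real.rpow_sub_one hxp.ne']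
        have hyp : 0 < |y| := by
          by_contra hh
          have : |y| = 0 := le_antisymm (not_lt.1 hh) (abs_nonneg _)
          rw [this] at h; linarith
        have e2 : |y| ^ r = |y| ^ (r - 1) * |y| := by
          rw [Real.rpow_sub_one hyp.ne']; field_simp
        rw [e1, e2, ← mul_assoc, ← Real.mul_rpow (by positivity) (by positivity)]
        gcongr
    have h3 := (abs_le.1 h2).1
    nlinarith [sq_nonneg r]
  · have hxp : 0 < |x| := lt_of_le_of_lt (by positivity) h
    have hx0 : x ≠ 0 := abs_pos.1 hxp
    have ht : |y / x| ≤ 1 / r := by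
      rw [abs_div, div_le_div_iff₀ hxp (by linarith)]; linarith
    have ht' : |r * (y / x)| ≤ 1 := by
      rw [abs_mul, abs_of_pos (by linarith : 0 < r)]
      calc r * |y / x| ≤ r * (1 / r) := by gcongr
        _ = 1 := by field_simp
    have ht1 : |y / x| < 1 := lt_of_le_of_lt ht (by rw [div_lt_one (by linarith)]; exact hr)
    have hpos : 0 < 1 + y / x := by linarith [(abs_lt.1 ht1).1]
    have h1 := aux_exp_bound hr.le ht' hpos
    have e0 : |x + y| ^ r = |x| ^ r * (1 + y / x) ^ r := by
      rw [← abs_of_pos hpos, ← Real.mul_rpow (by positivity) (by positivity), ← abs_mul]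
      congr 2; field_simp
    have h2 : (y / x) ^ 2 ≤ |y / x| ^ r := by
      rw [← sq_abs]
      have := Real.rpow_le_rpow_of_exponent_ge' (abs_nonneg (y / x)) ht1.le (by linarith) hr2
      simpa using this
    have h3 : |x| ^ r * |y / x| ^ r = |y| ^ r := by
      rw [← Real.mul_rpow (by positivity) (by positivity), ← abs_mul]
      congr 2; field_simp
    rw [e0]
    calc |x| ^ r * (1 + y / x) ^ r ≤ |x| ^ r * (1 + r * (y / x) + r ^ 2 * |y / x| ^ r) := by
          gcongr
          refine h1.trans ?_
          rw [mul_pow]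
          gcongr
      _ = |x| ^ r + r * (|x| ^ r / x) * y + r ^ 2 * (|x| ^ r * |y / x| ^ r) := by ring
      _ ≤ _ := by
          rw [h3]
          have : 0 ≤ (1 + r) ^ r + r * r ^ (r - 1) := by positivity
          nlinarith

lemma aux_quad {q : ℝ} (hq : 1 < q) : ∃ C : ℝ, 0 ≤ C ∧ ∀ A B D : ℝ, 0 ≤ A → 0 ≤ D →
    B ^ 2 ≤ A * D →
    (A + 2 * B + D) ^ q ≤ A ^ q + 2 * q * A ^ (q - 1) * B + C * (A ^ (q - 1) * D + D ^ q) := by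
  set k : ℝ := 9 * q ^ 2 with hk
  have hkpos : 0 < k := by positivity
  refine ⟨(2 * k + 2) ^ q + 2 * q * (k ^ (q - 1) * (k + 1)) + (q + q ^ 2 * 9), by positivity, ?_⟩
  intro A B D hA hD hB
  have hAq : 0 ≤ A ^ q := by positivity
  have hAq1 : 0 ≤ A ^ (q - 1) := by positivity
  have hDq : 0 ≤ D ^ q := by positivity
  have hB2 : |B| ≤ (A + D) / 2 := by
    refine abs_le_of_sq_le_sq ?_ (by positivity)
    nlinarith [sq_nonneg (A - D)]
  have hBl := (abs_le.1 hB2).1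
  have hBu := (abs_le.1 hB2).2
  have hLn : 0 ≤ A + 2 * B + D := by linarith
  rcases le_or_gt A (k * D) with h | h
  · have h1 : (A + 2 * B + D) ^ q ≤ (2 * k + 2) ^ q * D ^ q := by
      rw [← Real.mul_rpow (by positivity) hD]
      apply Real.rpow_le_rpow hLn _ (by linarith)
      linarith
    have h2 : A ^ (q - 1) * |B| ≤ k ^ (q - 1) * (k + 1) * D ^ q := by
      rcases eq_or_lt_of_le hD with h0 | hDp
      · rw [← h0] at hB
        have : B = 0 := by nlinarith
        rw [this]; simp; positivity
      · have e2 : D ^ q = D ^ (q - 1) * D := by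
          rw [Real.rpow_sub_one hDp.ne']; field_simp
        calc A ^ (q - 1) * |B| ≤ (k * D) ^ (q - 1) * ((k + 1) * D) := by
              gcongr
              nlinarith
          _ = _ := by rw [e2, Real.mul_rpow hkpos.le hD]; ring
    have h3 : -(A ^ (q - 1) * B) ≤ k ^ (q - 1) * (k + 1) * D ^ q := by
      refine le_trans ?_ h2
      nlinarith [neg_abs_le B]
    have h4 : 0 ≤ A ^ (q - 1) * D := by positivity
    have c1 : 0 ≤ (2 * k + 2) ^ q := by positivity
    have c2 : 0 ≤ 2 * q * (k ^ (q - 1) * (k + 1)) := by positivity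
    have c3 : 0 ≤ q + q ^ 2 * 9 := by positivity
    have h5 : 2 * q * -(A ^ (q - 1) * B) ≤ 2 * q * (k ^ (q - 1) * (k + 1) * D ^ q) := by gcongr
    have h6 : 0 ≤ ((2 * k + 2) ^ q + 2 * q * (k ^ (q - 1) * (k + 1)) + (q + q ^ 2 * 9)) * (A ^ (q - 1) * D) := by positivity
    have h7 : 0 ≤ (q + q ^ 2 * 9) * D ^ q := by positivity
    linarith
  · have hAp : 0 < A := lt_of_le_of_lt (by positivity) h
    set t := (2 * B + D) / A with htdef
    have hx2 : 0 ≤ D / A := by positivity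
    have hDA : k * (D / A) ≤ 1 := by
      rw [← mul_div_assoc, div_le_one hAp]; exact h.le
    have hk9 : 9 ≤ k := by nlinarith
    have hDA1 : D / A ≤ 1 := by nlinarith
    have htsq : t ^ 2 ≤ 9 * (D / A) := by
      -- (2B + D)^2 ≤ 9 A D
      have hDleA : D ≤ A := (div_le_one hAp).1 hDA1
      have hBabs : |B * D| ≤ A * D := by
        rw [abs_mul, abs_of_nonneg hD]
        gcongr; linarith
      have : (2 * B + D) ^ 2 ≤ 9 * (A * D) := by
        nlinarith [(abs_le.1 hBabs).2]
      rw [htdef, div_pow, div_le_iff₀ (by positivity)]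
      calc (2 * B + D) ^ 2 ≤ 9 * (A * D) := this
        _ = _ := by field_simp
    have hqt : |q * t| ≤ 1 := by
      rw [← sq_le_one_iff_abs_le_one, mul_pow]
      calc q ^ 2 * t ^ 2 ≤ q ^ 2 * (9 * (D / A)) := by gcongr
        _ = k * (D / A) := by rw [hk]; ring
        _ ≤ 1 := hDA
    have ht1 : |t| < 1 := by
      rw [abs_mul, abs_of_pos (by linarith : 0 < q)] at hqt
      nlinarith [abs_nonneg t]
    have hpos : 0 < 1 + t := by linarith [(abs_lt.1 ht1).1]
    have h1 := aux_exp_bound hq.le hqt hpos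
    have e0 : (A + 2 * B + D) ^ q = A ^ q * (1 + t) ^ q := by
      rw [← Real.mul_rpow hA hpos.le]
      congr 1; rw [htdef]; field_simp; ring
    have e1 : A ^ q = A ^ (q - 1) * A := by
      rw [Real.rpow_sub_one hAp.ne']; field_simp
    rw [e0]
    calc A ^ q * (1 + t) ^ q ≤ A ^ q * (1 + q * t + q ^ 2 * (9 * (D / A))) := by
          gcongr
          refine h1.trans ?_
          rw [mul_pow]
          gcongr
      _ = A ^ q + 2 * q * A ^ (q - 1) * B + (q + q ^ 2 * 9) * (A ^ (q - 1) * D) := by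
          rw [e1, htdef]; field_simp; ring
      _ ≤ _ := by
          have c1 : 0 ≤ (2 * k + 2) ^ q + 2 * q * (k ^ (q - 1) * (k + 1)) := by positivity
          have h4 : 0 ≤ A ^ (q - 1) * D := by positivity
          have h6 := mul_nonneg c1 h4
          have h7 : 0 ≤ ((2 * k + 2) ^ q + 2 * q * (k ^ (q - 1) * (k + 1)) + (q + q ^ 2 * 9)) * D ^ q := by positivity
          linarith

lemma aux_young {q θ : ℝ} (hq : 1 < q) (hθ : 0 < θ) : ∃ C : ℝ, 0 ≤ C ∧ ∀ w y : ℝ, 0 ≤ w → 0 ≤ y →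
    w ^ (q - 1) * y ≤ θ * w ^ q + C * y ^ q := by
  refine ⟨(1 / θ) ^ (q - 1), by positivity, fun w y hw hy => ?_⟩
  rcases le_or_gt y (θ * w) with h | h
  · rcases eq_or_lt_of_le hw with h0 | hwp
    · have : y = 0 := by rw [← h0] at h; linarith
      rw [this]; simp; positivity
    · have e1 : w ^ q = w ^ (q - 1) * w := by
        rw [Real.rpow_sub_one hwp.ne']; field_simp
      have : w ^ (q - 1) * y ≤ w ^ (q - 1) * (θ * w) := by gcongr
      have h2 : 0 ≤ (1 / θ) ^ (q - 1) * y ^ q := by positivity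
      rw [e1]; linarith
  · have hyp : 0 < y := lt_of_le_of_lt (by positivity) h
    have e1 : y ^ q = y ^ (q - 1) * y := by
      rw [Real.rpow_sub_one hyp.ne']; field_simp
    have h3 : w ^ (q - 1) ≤ (1 / θ * y) ^ (q - 1) := by
      apply Real.rpow_le_rpow hw _ (by linarith)
      rw [one_div, inv_mul_eq_div, le_div_iff₀ hθ]; linarith
    have h4 : 0 ≤ θ * w ^ q := by positivity
    rw [e1, ← mul_assoc, ← Real.mul_rpow (by positivity) hy]
    nlinarith

lemma aux_step {q : ℝ} (hq : 1 < q) : ∃ C : ℝ, 0 ≤ C ∧ ∀ W γ x e : ℝ, 0 ≤ W → 0 ≤ γ → γ ≤ 1 →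
    x ^ 2 ≤ (1 - γ) * W * γ →
    ((1 - γ) * W + 2 * (e * x) + e ^ 2 * γ) ^ q ≤
      W ^ q - 1 / 2 * (γ * W ^ q) + 2 * q * ((1 - γ) * W) ^ (q - 1) * x * e
        + C * (γ * (e ^ 2) ^ q) := by
  obtain ⟨C, hC, h⟩ := aux_quad hq
  obtain ⟨C', hC', h'⟩ := aux_young hq (θ := 1 / (2 * (C + 1))) (by positivity)
  refine ⟨C * (C' + 1), by positivity, fun W γ x e hW hγ hγ1 hx => ?_⟩
  have hA : 0 ≤ (1 - γ) * W := mul_nonneg (by linarith) hW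
  have hAW : (1 - γ) * W ≤ W := by nlinarith
  have h1 := h ((1 - γ) * W) (e * x) (e ^ 2 * γ) hA (by positivity) (by
    rw [mul_pow]; nlinarith [sq_nonneg e])
  have h2 := h' ((1 - γ) * W) (e ^ 2) hA (by positivity)
  have h3 : ((1 - γ) * W) ^ q ≤ (1 - γ) * W ^ q := by
    rw [Real.mul_rpow (by linarith) hW]
    gcongr
    have := Real.rpow_le_rpow_of_exponent_ge' (by linarith : 0 ≤ 1 - γ) (by linarith) (by norm_num) hq.le
    simpa using this
  have h3' : ((1 - γ) * W) ^ q ≤ W ^ q := Real.rpow_le_rpow hA hAW (by linarith)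
  have h4 : (e ^ 2 * γ) ^ q ≤ γ * (e ^ 2) ^ q := by
    rw [Real.mul_rpow (by positivity) hγ, mul_comm]
    gcongr
    have := Real.rpow_le_rpow_of_exponent_ge' hγ hγ1 (by norm_num) hq.le
    simpa using this
  have h5 : C * (1 / (2 * (C + 1)) * W ^ q) ≤ 1 / 2 * W ^ q := by
    have : C * (1 / (2 * (C + 1))) ≤ 1 / 2 := by
      rw [mul_one_div, div_le_div_iff₀ (by positivity) (by positivity)]; linarith
    have hWq : 0 ≤ W ^ q := by positivity
    nlinarith
  have h6 : C * (((1 - γ) * W) ^ (q - 1) * (e ^ 2 * γ)) ≤ γ * (1 / 2 * W ^ q + C * (C' * (e ^ 2) ^ q)) := by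
    calc _ = γ * (C * (((1 - γ) * W) ^ (q - 1) * e ^ 2)) := by ring
      _ ≤ γ * (C * (1 / (2 * (C + 1)) * W ^ q + C' * (e ^ 2) ^ q)) := by
        gcongr
        refine h2.trans ?_
        gcongr
      _ ≤ _ := by
        gcongr; rw [mul_add]; linarith
  have h7 : C * (e ^ 2 * γ) ^ q ≤ C * (γ * (e ^ 2) ^ q) := by gcongr
  nlinarith

lemma aux_summable {x R : ℕ → ℝ} {s : ℝ} (hs : 1 < s) (hx : ∀ n, 0 ≤ x n)
    (hR : ∀ n, 1 + ∑ k ∈ range (n + 1), x k ≤ R n) : Summable fun n => x n / R n ^ s := by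
  set X : ℕ → ℝ := fun n => 1 + ∑ k ∈ range n, x k with hX
  have hX1 : ∀ n, 1 ≤ X n := fun n => by
    have : 0 ≤ ∑ k ∈ range n, x k := sum_nonneg fun _ _ => hx _
    simp only [hX]; linarith
  have hXs : ∀ n, X (n + 1) = X n + x n := fun n => by simp only [hX, sum_range_succ]; ring
  have key : ∀ n, x n / R n ^ s ≤ (X n ^ (1 - s) - X (n + 1) ^ (1 - s)) / (s - 1) := by
    intro n
    have p0 : 0 < X n := by linarith [hX1 n]
    have p1 : 0 < X (n + 1) := by linarith [hX1 (n + 1)]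
    have h1 : x n / R n ^ s ≤ x n / X (n + 1) ^ s := by
      gcongr
      · exact hx n
      · exact hR n
    refine h1.trans ?_
    rw [le_div_iff₀ (by linarith)]
    set u := X n / X (n + 1) with hu
    have hup : 0 < u := by positivity
    have e1 : X n ^ (1 - s) = X (n + 1) ^ (1 - s) * u ^ (1 - s) := by
      rw [← Real.mul_rpow p1.le hup.le, hu]; congr 1; field_simp
    have e2 : x n / X (n + 1) ^ s = X (n + 1) ^ (1 - s) * (1 - u) := by
      rw [Real.rpow_sub p1, Real.rpow_one, hu]
      have : x n = X (n + 1) - X n := by rw [hXs]; ring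
      rw [this]; field_simp
    have e3 : 1 + (s - 1) * (1 - u) ≤ u ^ (1 - s) := by
      rw [Real.rpow_def_of_pos hup]
      have a1 := Real.add_one_le_exp (Real.log u * (1 - s))
      have a2 := Real.log_le_sub_one_of_pos hup
      nlinarith
    have p3 : 0 ≤ X (n + 1) ^ (1 - s) := by positivity
    rw [e1, e2]
    nlinarith
  refine summable_of_sum_range_le (c := 1 / (s - 1)) ?_ ?_
  · intro n
    have := hX1 (n + 1)
    have h2 := hR n
    exact div_nonneg (hx n) (Real.rpow_nonneg (by simp only [hX] at this; linarith) _)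
  · intro n
    calc ∑ i ∈ range n, x i / R i ^ s ≤ ∑ i ∈ range n, (X i ^ (1 - s) - X (i + 1) ^ (1 - s)) / (s - 1) :=
          sum_le_sum fun i _ => key i
      _ = (X 0 ^ (1 - s) - X n ^ (1 - s)) / (s - 1) := by
          rw [← sum_div, sum_range_sub']
      _ ≤ _ := by
          have : X 0 = 1 := by simp [hX]
          rw [this, Real.one_rpow]
          have h0 : 0 ≤ X n ^ (1 - s) := Real.rpow_nonneg (by linarith [hX1 n]) _
          have : 0 < s - 1 := by linarith
          gcongr; linarith

lemma aux_kronecker {y R : ℕ → ℝ} (hR : Monotone R) (hpos : ∀ n, 0 < R n)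
    (hRt : Tendsto R atTop atTop) {l : ℝ}
    (h : Tendsto (fun n => ∑ k ∈ range n, y k / R k) atTop (𝓝 l)) :
    Tendsto (fun n => (∑ k ∈ range (n + 1), y k) / R n) atTop (𝓝 0) := by
  set T : ℕ → ℝ := fun n => ∑ k ∈ range n, y k / R k with hT
  have hid : ∀ n, ∑ k ∈ range (n + 1), y k =
      R n * (T (n + 1) - l) + R 0 * l - ∑ k ∈ range n, (T (k + 1) - l) * (R (k + 1) - R k) := by
    intro n
    induction n with
    | zero => simp [hT]; rw [mul_sub, mul_div_cancel₀ _ (hpos 0).ne']; ring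
    | succ n ih =>
      rw [sum_range_succ, ih, sum_range_succ (fun k => (T (k + 1) - l) * (R (k + 1) - R k))]
      have : y (n + 1) = R (n + 1) * (T (n + 1 + 1) - T (n + 1)) := by
        simp only [hT]; rw [sum_range_succ _ (n + 1)]
        have := (hpos (n + 1)).ne'
        field_simp; ring
      rw [this]; ring
  have hT1 : Tendsto (fun n => T (n + 1) - l) atTop (𝓝 0) := by
    have := (tendsto_add_atTop_iff_nat 1).2 h
    simpa using this.sub_const l
  have hsumR : ∀ n, ∑ k ∈ range n, (R (k + 1) - R k) = R n - R 0 := fun n => sum_range_sub R n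
  have ho : (fun n => ∑ k ∈ range n, (T (k + 1) - l) * (R (k + 1) - R k)) =o[atTop]
      fun n => ∑ k ∈ range n, (R (k + 1) - R k) := by
    apply Asymptotics.IsLittleO.sum_range
    · have h1 : (fun n => T (n + 1) - l) =o[atTop] (fun _ => (1 : ℝ)) :=
        (Asymptotics.isLittleO_one_iff ℝ).2 hT1
      simpa using h1.mul_isBigO (Asymptotics.isBigO_refl (fun n => R (n + 1) - R n) atTop)
    · intro n; simpa using hR (Nat.le_succ n)
    · simp only [hsumR]
      exact tendsto_atTop_add_const_right _ _ hRt
  have ho2 : (fun n => ∑ k ∈ range n, (T (k + 1) - l) * (R (k + 1) - R k)) =o[atTop] R := by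
    refine ho.trans_isBigO ?_
    refine Asymptotics.IsBigO.of_bound 1 (Eventually.of_forall fun n => ?_)
    rw [hsumR, Real.norm_of_nonneg (by linarith [hR (Nat.zero_le n)]), Real.norm_of_nonneg (hpos n).le]
    linarith [hpos 0]
  have t3 := ho2.tendsto_div_nhds_zero
  have t2 : Tendsto (fun n => R 0 * l / R n) atTop (𝓝 0) := hRt.const_div_atTop _
  have := (hT1.add t2).sub t3
  simp only [add_zero, sub_zero] at this
  refine this.congr fun n => ?_
  rw [hid]
  have := (hpos n).ne'
  field_simp


/-! ### martingale convergence -/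

lemma aux_le_one_add_rpow {r x : ℝ} (hr : 1 ≤ r) (hx : 0 ≤ x) : x ≤ 1 + x ^ r := by
  rcases le_or_gt x 1 with h | h
  · have : 0 ≤ x ^ r := by positivity
    linarith
  · have := Real.rpow_le_rpow_of_exponent_le h.le hr
    rw [Real.rpow_one] at this; linarith

lemma aux_integrable_of_rpow {Ω : Type*} {m0 : MeasurableSpace Ω} {μ : Measure Ω}
    [IsProbabilityMeasure μ] {r : ℝ} (hr : 1 ≤ r) {X : Ω → ℝ} (hX : AEStronglyMeasurable X μ)
    (h : Integrable (fun ω => |X ω| ^ r) μ) : Integrable X μ := by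
  refine Integrable.mono' ((integrable_const (1 : ℝ)).add h) hX (Eventually.of_forall fun ω => ?_)
  exact aux_le_one_add_rpow hr (abs_nonneg _)

lemma aux_add_rpow {r : ℝ} (hr : 0 ≤ r) (x y : ℝ) :
    |x + y| ^ r ≤ 2 ^ r * (|x| ^ r + |y| ^ r) := by
  have h0 : |x + y| ≤ 2 * max |x| |y| := by
    have := abs_add_le x y
    have := le_max_left |x| |y|
    have := le_max_right |x| |y|
    linarith
  calc |x + y| ^ r ≤ (2 * max |x| |y|) ^ r := Real.rpow_le_rpow (abs_nonneg _) h0 hr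
    _ = 2 ^ r * (max |x| |y|) ^ r := Real.mul_rpow (by norm_num) (by positivity)
    _ ≤ _ := by
      gcongr
      have hx : 0 ≤ |x| ^ r := by positivity
      have hy : 0 ≤ |y| ^ r := by positivity
      rcases max_choice |x| |y| with h | h <;> rw [h] <;> linarith

lemma aux_meas_rpow {Ω : Type*} {m : MeasurableSpace Ω} {X : Ω → ℝ} (hX : Measurable X) (r : ℝ) :
    Measurable fun ω => |X ω| ^ r := (measurable_norm.comp hX).pow_const r

lemma aux_smeas_rpow {Ω : Type*} {m : MeasurableSpace Ω} {X : Ω → ℝ} (hX : StronglyMeasurable X)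
    (r : ℝ) : StronglyMeasurable fun ω => |X ω| ^ r :=
  (aux_meas_rpow hX.measurable r).stronglyMeasurable

lemma aux_smeas_psi {Ω : Type*} {m : MeasurableSpace Ω} {X : Ω → ℝ} (hX : StronglyMeasurable X)
    (r : ℝ) : StronglyMeasurable fun ω => r * (|X ω| ^ r / X ω) :=
  (((aux_meas_rpow hX.measurable r).div hX.measurable).const_mul r).stronglyMeasurable

lemma aux_mc_core {Ω : Type*} {m0 : MeasurableSpace Ω} {μ : Measure Ω} [IsProbabilityMeasure μ]
    (F : Filtration ℕ m0) {r : ℝ} (hr : 1 < r) (hr2 : r ≤ 2) (D : ℕ → Ω → ℝ)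
    (hD : ∀ k, StronglyMeasurable[F (k + 1)] (D k))
    (hDi : ∀ k, Integrable (fun ω => |D k ω| ^ r) μ)
    (hD0 : ∀ k, μ[D k|F k] =ᵐ[μ] 0) (B : ℝ)
    (hB : ∀ n, ∑ k ∈ range n, ∫ ω, |D k ω| ^ r ∂μ ≤ B) :
    ∀ᵐ ω ∂μ, ∃ l : ℝ, Tendsto (fun n => ∑ k ∈ range n, D k ω) atTop (𝓝 l) := by
  obtain ⟨C, hC, hs⟩ := aux_scalar hr hr2
  set X : ℕ → Ω → ℝ := fun n ω => ∑ k ∈ range n, D k ω with hX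
  have hXs : ∀ n, X (n + 1) = X n + D n := fun n => by
    ext ω; simp [hX, sum_range_succ]
  have hXm : ∀ n, StronglyMeasurable[F n] (X n) := by
    intro n
    have : X n = ∑ k ∈ range n, D k := by ext ω; simp [hX]
    rw [this]
    apply Finset.stronglyMeasurable_sum
    intro k hk
    exact (hD k).mono (F.mono (Nat.succ_le_of_lt (mem_range.1 hk)))
  have hXm' : ∀ n, StronglyMeasurable (X n) := fun n => (hXm n).mono (F.le n)
  have hDm' : ∀ n, StronglyMeasurable (D n) := fun n => (hD n).mono (F.le _)
  have hDint : ∀ n, Integrable (D n) μ := fun n =>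
    aux_integrable_of_rpow hr.le (hDm' n).aestronglyMeasurable (hDi n)
  have key : ∀ n, Integrable (fun ω => |X n ω| ^ r) μ ∧
      ∫ ω, |X n ω| ^ r ∂μ ≤ C * ∑ k ∈ range n, ∫ ω, |D k ω| ^ r ∂μ := by
    intro n
    induction n with
    | zero =>
      simp [hX, Real.zero_rpow (by linarith : r ≠ 0)]
    | succ n ih =>
      obtain ⟨ih1, ih2⟩ := ih
      have hi : Integrable (fun ω => |X (n + 1) ω| ^ r) μ := by
        refine Integrable.mono' ((ih1.add (hDi n)).const_mul (2 ^ r)) ?_ (Eventually.of_forall fun ω => ?_)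
        · exact ((hXm' (n + 1)).measurable.abs.pow_const r).aestronglyMeasurable
        · rw [Real.norm_of_nonneg (by positivity), hXs]
          exact aux_add_rpow (by linarith) _ _
      refine ⟨hi, ?_⟩
      set ψ : Ω → ℝ := fun ω => r * (|X n ω| ^ r / X n ω) with hψ
      have hψm : StronglyMeasurable[F n] ψ := aux_smeas_psi (hXm n) r
      have hψi : Integrable (ψ * D n) μ := by
        refine Integrable.mono' ((ih1.add (hDi n)).const_mul r) ?_ (Eventually.of_forall fun ω => ?_)
        · exact ((hψm.mono (F.le n)).mul (hDm' n)).aestronglyMeasurable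
        · simp only [hψ, Pi.mul_apply, Pi.add_apply, Real.norm_eq_abs]
          rw [mul_assoc, abs_mul, abs_of_pos (by linarith : 0 < r)]
          gcongr
          rw [abs_mul, abs_div, abs_of_nonneg (by positivity : 0 ≤ |X n ω| ^ r)]
          have hx : 0 ≤ |X n ω| ^ r := by positivity
          have hy : 0 ≤ |D n ω| ^ r := by positivity
          rcases eq_or_lt_of_le (abs_nonneg (X n ω)) with h0 | hp
          · rw [← h0]; simp; positivity
          rcases le_or_gt |D n ω| |X n ω| with h | h
          · have : |X n ω| ^ r / |X n ω| * |D n ω| ≤ |X n ω| ^ r / |X n ω| * |X n ω| := by gcongr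
            rw [div_mul_cancel₀ _ hp.ne'] at this
            linarith
          · have hq : 0 < |D n ω| := hp.trans h
            have : |X n ω| ^ r / |X n ω| * |D n ω| ≤ |D n ω| ^ r / |D n ω| * |D n ω| := by
              rw [← Real.rpow_sub_one hp.ne', ← Real.rpow_sub_one hq.ne']
              gcongr
            rw [div_mul_cancel₀ _ hq.ne'] at this
            linarith
      have hψ0 : ∫ ω, (ψ * D n) ω ∂μ = 0 := by
        rw [← integral_condExp (F.le n)]
        have h1 := condExp_mul_of_stronglyMeasurable_left (μ := μ) hψm hψi (hDint n)
        have h2 : μ[ψ * D n|F n] =ᵐ[μ] 0 := by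
          filter_upwards [h1, hD0 n] with ω a b
          rw [a]; simp [b]
        rw [integral_congr_ae h2]; simp
      calc ∫ ω, |X (n + 1) ω| ^ r ∂μ
          ≤ ∫ ω, (|X n ω| ^ r + (ψ * D n) ω + C * |D n ω| ^ r) ∂μ := by
            apply integral_mono hi ((ih1.add hψi).add ((hDi n).const_mul C))
            intro ω
            simp only [hXs]
            exact hs _ _
        _ = ∫ ω, |X n ω| ^ r ∂μ + C * ∫ ω, |D n ω| ^ r ∂μ := by
            have e1 := integral_add (ih1.add hψi) ((hDi n).const_mul C)
            have e2 := integral_add ih1 hψi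
            simp only [Pi.add_apply] at e1 e2
            rw [e1, e2, hψ0, integral_const_mul]; ring
        _ ≤ _ := by rw [sum_range_succ, mul_add]; linarith
  have hXint : ∀ n, Integrable (X n) μ := fun n =>
    aux_integrable_of_rpow hr.le (hXm' n).aestronglyMeasurable (key n).1
  have hmart : Martingale X F μ := by
    refine martingale_nat hXm hXint fun n => ?_
    have h1 := condExp_add (hXint n) (hDint n) (F n)
    rw [hXs]
    filter_upwards [h1, hD0 n] with ω a b
    rw [a, Pi.add_apply, b, condExp_of_stronglyMeasurable (F.le n) (hXm n) (hXint n)]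
    simp
  have hb : ∀ n, eLpNorm (X n) 1 μ ≤ ((1 + C * B).toNNReal : ENNReal) := by
    intro n
    rw [eLpNorm_one_eq_lintegral_enorm, ← ofReal_integral_norm_eq_lintegral_enorm (hXint n)]
    apply ENNReal.ofReal_le_ofReal
    calc ∫ ω, ‖X n ω‖ ∂μ ≤ ∫ ω, (1 + |X n ω| ^ r) ∂μ := by
          apply integral_mono (hXint n).norm ((integrable_const _).add (key n).1)
          intro ω
          exact aux_le_one_add_rpow hr.le (abs_nonneg _)
      _ = 1 + ∫ ω, |X n ω| ^ r ∂μ := by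
          rw [integral_add (integrable_const _) (key n).1]; simp
      _ ≤ _ := by
          have := (key n).2
          have := mul_le_mul_of_nonneg_left (hB n) hC
          linarith
  exact hmart.submartingale.exists_ae_tendsto_of_bdd hb

lemma aux_mc {Ω : Type*} {m0 : MeasurableSpace Ω} {μ : Measure Ω} [IsProbabilityMeasure μ]
    (F : Filtration ℕ m0) {r : ℝ} (hr : 1 < r) (hr2 : r ≤ 2) (ζ z : ℕ → Ω → ℝ)
    (hζ : ∀ k, StronglyMeasurable[F (k + 1)] (ζ k))
    (hζi : ∀ k, Integrable (fun ω => |ζ k ω| ^ r) μ)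
    (hζb : ∀ᵐ ω ∂μ, ∃ C : ℝ, ∀ k, (μ[fun ω => |ζ k ω| ^ r|F k]) ω ≤ C)
    (hz : ∀ k, StronglyMeasurable[F k] (z k))
    (hzs : ∀ᵐ ω ∂μ, Summable fun k => |z k ω| ^ r) :
    ∀ᵐ ω ∂μ, ∃ l : ℝ, Tendsto (fun n => ∑ k ∈ range n, z k ω * (ζ k ω - (μ[ζ k|F k]) ω)) atTop (𝓝 l) := by
  have hζm' : ∀ n, StronglyMeasurable (ζ n) := fun n => (hζ n).mono (F.le _)
  have hζint : ∀ n, Integrable (ζ n) μ := fun n =>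
    aux_integrable_of_rpow hr.le (hζm' n).aestronglyMeasurable (hζi n)
  set m : ℕ → Ω → ℝ := fun k => μ[ζ k|F k] with hm
  set v : ℕ → Ω → ℝ := fun k => μ[fun ω => |ζ k ω| ^ r|F k] with hv
  have hmm : ∀ k, StronglyMeasurable[F k] (m k) := fun k => stronglyMeasurable_condExp
  have hvm : ∀ k, StronglyMeasurable[F k] (v k) := fun k => stronglyMeasurable_condExp
  have hv0 : ∀ᵐ ω ∂μ, ∀ k, 0 ≤ v k ω := by
    rw [ae_all_iff]; intro k
    exact condExp_nonneg (Eventually.of_forall fun ω => by positivity)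
  have hmv : ∀ᵐ ω ∂μ, ∀ k, |m k ω| ≤ 1 + v k ω := by
    rw [ae_all_iff]; intro k
    have hi : Integrable ((fun _ => (1 : ℝ)) + fun ω => |ζ k ω| ^ r) μ := (integrable_const _).add (hζi k)
    have e1 : μ[(fun _ => (1 : ℝ)) + fun ω => |ζ k ω| ^ r|F k] =ᵐ[μ] fun ω => 1 + v k ω := by
      refine (condExp_add (integrable_const _) (hζi k) _).trans ?_
      rw [condExp_const (F.le k)]
      exact EventuallyEq.rfl
    have h1 : μ[ζ k|F k] ≤ᵐ[μ] μ[(fun _ => (1 : ℝ)) + fun ω => |ζ k ω| ^ r|F k] :=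
      condExp_mono (hζint k) hi (Eventually.of_forall fun ω =>
        (le_abs_self _).trans (aux_le_one_add_rpow hr.le (abs_nonneg _)))
    have h2 : μ[-ζ k|F k] ≤ᵐ[μ] μ[(fun _ => (1 : ℝ)) + fun ω => |ζ k ω| ^ r|F k] :=
      condExp_mono (hζint k).neg hi (Eventually.of_forall fun ω =>
        (neg_le_abs _).trans (aux_le_one_add_rpow hr.le (abs_nonneg _)))
    filter_upwards [h1, h2, e1, condExp_neg (ζ k) (F k)] with ω a b c e
    rw [c] at a b
    rw [e, Pi.neg_apply] at b
    exact abs_le.2 ⟨by simp only [hm]; linarith, a⟩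
  set A : ℕ → Ω → ℝ := fun n ω => ∑ k ∈ range (n + 1), |z k ω| ^ r * (1 + |v k ω| + |m k ω| ^ r) with hA
  have hterm : ∀ k ω, 0 ≤ |z k ω| ^ r * (1 + |v k ω| + |m k ω| ^ r) := fun k ω => by positivity
  have hAmono : ∀ ω, Monotone fun n => A n ω := by
    intro ω
    refine monotone_nat_of_le_succ fun n => ?_
    simp only [hA]
    rw [sum_range_succ _ (n + 1)]
    linarith [hterm (n + 1) ω]
  have hAm : ∀ n, Measurable[F n] (A n) := by
    intro n
    refine Finset.measurable_sum _ ?_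
    intro k hk
    have hle : F k ≤ F n := F.mono (Nat.lt_succ_iff.1 (mem_range.1 hk))
    have h1 := ((hz k).mono hle).measurable
    have h2 := ((hvm k).mono hle).measurable
    have h3 := ((hmm k).mono hle).measurable
    exact (aux_meas_rpow h1 r).mul ((measurable_const.add (measurable_norm.comp h2)).add (aux_meas_rpow h3 r))
  have hloc : ∀ K : ℕ, ∀ᵐ ω ∂μ, (∀ n, A n ω ≤ K) →
      ∃ l : ℝ, Tendsto (fun n => ∑ k ∈ range n, z k ω * (ζ k ω - m k ω)) atTop (𝓝 l) := by
    intro K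
    set zK : ℕ → Ω → ℝ := fun k => {ω | A k ω ≤ K}.indicator (z k) with hzK
    have hzKm : ∀ k, StronglyMeasurable[F k] (zK k) := fun k =>
      (hz k).indicator (measurableSet_le (hAm k) measurable_const)
    have hzKsum : ∀ n ω, ∑ k ∈ range n, |zK k ω| ^ r * (1 + |v k ω| + |m k ω| ^ r) ≤ K := by
      intro n ω
      induction n with
      | zero => simp
      | succ n ih =>
        by_cases h : A n ω ≤ K
        · refine le_trans (le_of_eq ?_) h
          simp only [hA]
          refine sum_congr rfl fun k hk => ?_
          have : A k ω ≤ K := (hAmono ω (Nat.lt_succ_iff.1 (mem_range.1 hk))).trans h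
          simp only [hzK]
          rw [Set.indicator_of_mem (by exact this)]
        · rw [sum_range_succ]
          have : zK n ω = 0 := by
            simp only [hzK]; exact Set.indicator_of_notMem (by exact h) _
          rw [this]; simpa [Real.zero_rpow (by linarith : r ≠ 0)] using ih
    have htermK : ∀ k ω, 0 ≤ |zK k ω| ^ r * (1 + |v k ω| + |m k ω| ^ r) := fun k ω => by positivity
    have hzK1 : ∀ k ω, |zK k ω| ^ r * (1 + |v k ω| + |m k ω| ^ r) ≤ K := by
      intro k ω
      refine le_trans ?_ (hzKsum (k + 1) ω)
      exact single_le_sum (f := fun k => |zK k ω| ^ r * (1 + |v k ω| + |m k ω| ^ r))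
        (fun i _ => htermK i ω) (mem_range.2 (Nat.lt_succ_self k))
    have hzK2 : ∀ k ω, |zK k ω| ^ r ≤ K := by
      intro k ω
      refine le_trans ?_ (hzK1 k ω)
      have h1 : 0 ≤ |zK k ω| ^ r := by positivity
      have h2 : 0 ≤ |v k ω| + |m k ω| ^ r := by positivity
      nlinarith
    have hzK3 : ∀ k ω, |zK k ω| ^ r * |m k ω| ^ r ≤ K := by
      intro k ω
      refine le_trans ?_ (hzK1 k ω)
      have h1 : 0 ≤ |zK k ω| ^ r := by positivity
      have h2 : 0 ≤ 1 + |v k ω| := by positivity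
      nlinarith
    have hzKm' : ∀ k, StronglyMeasurable (zK k) := fun k => (hzKm k).mono (F.le k)
    have hmm' : ∀ k, StronglyMeasurable (m k) := fun k => (hmm k).mono (F.le k)
    have hI1 : ∀ k, Integrable ((fun ω => |zK k ω| ^ r) * fun ω => |ζ k ω| ^ r) μ := by
      intro k
      refine Integrable.bdd_mul (hζi k) ?_ (c := K) (Eventually.of_forall fun ω => ?_)
      · exact ((hzKm' k).measurable.abs.pow_const r).aestronglyMeasurable
      · rw [Real.norm_of_nonneg (by positivity)]; exact hzK2 k ω
    have hI2 : ∀ k, Integrable (fun ω => |zK k ω| ^ r * |m k ω| ^ r) μ := by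
      intro k
      refine Integrable.mono' (integrable_const (K : ℝ)) ?_ (Eventually.of_forall fun ω => ?_)
      · exact (((hzKm' k).measurable.abs.pow_const r).mul ((hmm' k).measurable.abs.pow_const r)).aestronglyMeasurable
      · rw [Real.norm_of_nonneg (by positivity)]; exact hzK3 k ω
    have hpt : ∀ k ω, |zK k ω * (ζ k ω - m k ω)| ^ r ≤
        2 ^ r * (|zK k ω| ^ r * |ζ k ω| ^ r + |zK k ω| ^ r * |m k ω| ^ r) := by
      intro k ω
      have := aux_add_rpow (r := r) (by linarith) (zK k ω * ζ k ω) (-(zK k ω * m k ω))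
      rw [abs_neg, abs_mul, abs_mul, Real.mul_rpow (by positivity) (by positivity),
        Real.mul_rpow (by positivity) (by positivity)] at this
      refine le_trans (le_of_eq ?_) this
      congr 2; ring
    have hDi : ∀ k, Integrable (fun ω => |zK k ω * (ζ k ω - m k ω)| ^ r) μ := by
      intro k
      refine Integrable.mono' (((hI1 k).add (hI2 k)).const_mul (2 ^ r)) ?_ (Eventually.of_forall fun ω => ?_)
      · exact (((hzKm' k).mul ((hζm' k).sub (hmm' k))).measurable.abs.pow_const r).aestronglyMeasurable
      · rw [Real.norm_of_nonneg (by positivity)]; exact hpt k ω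
    have hIv : ∀ k, Integrable (fun ω => |zK k ω| ^ r * v k ω) μ := by
      intro k
      refine Integrable.bdd_mul (integrable_condExp) ?_ (c := K) (Eventually.of_forall fun ω => ?_)
      · exact ((hzKm' k).measurable.abs.pow_const r).aestronglyMeasurable
      · rw [Real.norm_of_nonneg (by positivity)]; exact hzK2 k ω
    have hE : ∀ k, ∫ ω, |zK k ω * (ζ k ω - m k ω)| ^ r ∂μ ≤
        2 ^ r * ∫ ω, (|zK k ω| ^ r * v k ω + |zK k ω| ^ r * |m k ω| ^ r) ∂μ := by
      intro k
      have e1 : ∫ ω, |zK k ω| ^ r * |ζ k ω| ^ r ∂μ = ∫ ω, |zK k ω| ^ r * v k ω ∂μ := by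
        have h1 := condExp_mul_of_stronglyMeasurable_left (μ := μ) (m := F k)
          (f := fun ω => |zK k ω| ^ r) (g := fun ω => |ζ k ω| ^ r)
          (aux_smeas_rpow (hzKm k) r) (hI1 k) (hζi k)
        have h2 := integral_congr_ae h1
        rw [integral_condExp (F.le k)] at h2
        exact h2
      calc _ ≤ ∫ ω, 2 ^ r * (|zK k ω| ^ r * |ζ k ω| ^ r + |zK k ω| ^ r * |m k ω| ^ r) ∂μ :=
            integral_mono (hDi k) (((hI1 k).add (hI2 k)).const_mul (2 ^ r)) (hpt k)
        _ = _ := by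
            rw [integral_const_mul, integral_add (hIv k) (hI2 k), ← e1]
            congr 1
            exact integral_add (hI1 k) (hI2 k)
    have hcore := aux_mc_core F hr hr2 (fun k ω => zK k ω * (ζ k ω - m k ω)) (μ := μ)
      (fun k => ((hzKm k).mono (F.mono (Nat.le_succ k))).mul
        ((hζ k).sub ((hmm k).mono (F.mono (Nat.le_succ k))))) hDi ?_ (2 ^ r * K) ?_
    · filter_upwards [hcore] with ω h hAω
      obtain ⟨l, hl⟩ := h
      refine ⟨l, hl.congr fun n => sum_congr rfl fun k _ => ?_⟩
      simp only [hzK]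
      rw [Set.indicator_of_mem (by exact hAω k)]
    · intro k
      have hsubint : Integrable (ζ k - m k) μ := (hζint k).sub integrable_condExp
      have hprod : Integrable (zK k * (ζ k - m k)) μ :=
        aux_integrable_of_rpow hr.le
          ((hzKm' k).mul ((hζm' k).sub (hmm' k))).aestronglyMeasurable (hDi k)
      have h1 := condExp_mul_of_stronglyMeasurable_left (μ := μ) (hzKm k) hprod hsubint
      have h2 := condExp_sub (hζint k) (integrable_condExp (μ := μ) (m := F k) (f := ζ k)) (F k)
      have h3 : μ[m k|F k] = m k :=
        condExp_of_stronglyMeasurable (F.le k) (hmm k) integrable_condExp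
      filter_upwards [h1, h2] with ω a b
      have c : (fun ω => zK k ω * (ζ k ω - m k ω)) = zK k * (ζ k - m k) := rfl
      rw [c, a, Pi.mul_apply, b, Pi.sub_apply, h3]
      simp [hm]
    · intro n
      calc _ ≤ ∑ k ∈ range n, 2 ^ r * ∫ ω, (|zK k ω| ^ r * v k ω + |zK k ω| ^ r * |m k ω| ^ r) ∂μ :=
            sum_le_sum fun k _ => hE k
        _ = 2 ^ r * ∫ ω, ∑ k ∈ range n, (|zK k ω| ^ r * v k ω + |zK k ω| ^ r * |m k ω| ^ r) ∂μ := by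
            rw [← mul_sum, integral_finsetSum]
            intro k _
            exact (hIv k).add (hI2 k)
        _ ≤ 2 ^ r * ∫ _ω, (K : ℝ) ∂μ := by
            gcongr
            · exact integrable_finsetSum _ fun k _ => (hIv k).add (hI2 k)
            · exact integrable_const _
            · intro ω
              refine le_trans (sum_le_sum fun k _ => ?_) (hzKsum n ω)
              have h1 : 0 ≤ |zK k ω| ^ r := by positivity
              have h2 := le_abs_self (v k ω)
              nlinarith
        _ = _ := by simp
  have hall := ae_all_iff.2 hloc
  filter_upwards [hall, hζb, hzs, hv0, hmv] with ω h hb hs h0 hmvω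
  obtain ⟨C, hC⟩ := hb
  have hC0 : 0 ≤ C := (h0 0).trans (hC 0)
  set c : ℝ := 1 + C + (1 + C) ^ r with hc
  have hbd : ∀ n, A n ω ≤ c * ∑' k, |z k ω| ^ r := by
    intro n
    calc A n ω ≤ ∑ k ∈ range (n + 1), c * |z k ω| ^ r := by
          refine sum_le_sum fun k _ => ?_
          rw [mul_comm c]
          have h2 : |v k ω| ≤ C := by rw [abs_of_nonneg (h0 k)]; exact hC k
          have h3 : |m k ω| ^ r ≤ (1 + C) ^ r :=
            Real.rpow_le_rpow (abs_nonneg _) ((hmvω k).trans (by have := hC k; simp only [hv]; linarith)) (by linarith)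
          gcongr
          simp only [hc]; linarith
      _ = c * ∑ k ∈ range (n + 1), |z k ω| ^ r := by rw [mul_sum]
      _ ≤ _ := by
          gcongr
          exact hs.sum_le_tsum _ fun k _ => by positivity
  obtain ⟨K, hK⟩ := exists_nat_ge (c * ∑' k, |z k ω| ^ r)
  exact h K fun n => (hbd n).trans hK

lemma aux_lln {Ω : Type*} {m0 : MeasurableSpace Ω} {μ : Measure Ω} [IsProbabilityMeasure μ]
    (F : Filtration ℕ m0) {r : ℝ} (hr : 1 < r) (hr2 : r ≤ 2) (ζ y R : ℕ → Ω → ℝ)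
    (hζ : ∀ k, StronglyMeasurable[F (k + 1)] (ζ k))
    (hζi : ∀ k, Integrable (fun ω => |ζ k ω| ^ r) μ)
    (hζb : ∀ᵐ ω ∂μ, ∃ C : ℝ, ∀ k, (μ[fun ω => |ζ k ω| ^ r|F k]) ω ≤ C)
    (hy : ∀ k, Measurable[F k] (y k)) (hR : ∀ k, Measurable[F k] (R k))
    (hRpos : ∀ k ω, 0 < R k ω) (hRmono : ∀ ω, Monotone fun k => R k ω)
    (hRt : ∀ᵐ ω ∂μ, Tendsto (fun k => R k ω) atTop atTop)
    (hzs : ∀ᵐ ω ∂μ, Summable fun k => |y k ω / R k ω| ^ r) :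
    ∀ᵐ ω ∂μ, Tendsto (fun n => (∑ k ∈ range (n + 1), y k ω * (ζ k ω - (μ[ζ k|F k]) ω)) / R n ω)
      atTop (𝓝 0) := by
  have h := aux_mc F hr hr2 ζ (fun k ω => y k ω / R k ω) hζ hζi hζb
    (fun k => ((hy k).div (hR k)).stronglyMeasurable) hzs
  filter_upwards [h, hRt] with ω hω hRω
  obtain ⟨l, hl⟩ := hω
  refine aux_kronecker (hRmono ω) (fun n => hRpos n ω) hRω (l := l) (hl.congr fun n => ?_)
  refine sum_congr rfl fun k _ => ?_
  ring


/-! ### linear algebra -/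

lemma aux_symm_dot {d : ℕ} {N : Matrix (Fin d) (Fin d) ℝ} (hN : N.PosDef) (x y : Fin d → ℝ) :
    x ⬝ᵥ (N *ᵥ y) = y ⬝ᵥ (N *ᵥ x) := by
  have h : Nᵀ = N := by
    have := hN.isHermitian
    rw [Matrix.IsHermitian, conjTranspose_eq_transpose_of_trivial] at this
    exact this
  rw [dotProduct_mulVec, ← mulVec_transpose, h, dotProduct_comm]

lemma aux_nonneg_dot {d : ℕ} {N : Matrix (Fin d) (Fin d) ℝ} (hN : N.PosDef) (x : Fin d → ℝ) :
    0 ≤ x ⬝ᵥ (N *ᵥ x) := by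
  simpa using hN.posSemidef.dotProduct_mulVec_nonneg x

lemma aux_cs_dot {d : ℕ} {N : Matrix (Fin d) (Fin d) ℝ} (hN : N.PosDef) (x y : Fin d → ℝ) :
    (x ⬝ᵥ (N *ᵥ y)) ^ 2 ≤ (x ⬝ᵥ (N *ᵥ x)) * (y ⬝ᵥ (N *ᵥ y)) := by
  have h : ∀ t : ℝ, 0 ≤ (y ⬝ᵥ (N *ᵥ y)) * (t * t) + (2 * (x ⬝ᵥ (N *ᵥ y))) * t + x ⬝ᵥ (N *ᵥ x) := by
    intro t
    have := aux_nonneg_dot hN (x + t • y)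
    simp only [mulVec_add, mulVec_smul, dotProduct_add, add_dotProduct, dotProduct_smul,
      smul_dotProduct, smul_eq_mul] at this
    rw [aux_symm_dot hN y x] at this
    linarith
  have := discrim_le_zero h
  rw [discrim] at this
  linarith

lemma aux_dot_cs {d : ℕ} (x y : Fin d → ℝ) : (x ⬝ᵥ y) ^ 2 ≤ (x ⬝ᵥ x) * (y ⬝ᵥ y) := by
  have := Finset.sum_mul_sq_le_sq_mul_sq univ x y
  simpa [dotProduct, sq] using this

lemma aux_dot_nonneg {d : ℕ} (x : Fin d → ℝ) : 0 ≤ x ⬝ᵥ x :=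
  sum_nonneg fun i _ => mul_self_nonneg (x i)

lemma aux_posdef_step {d : ℕ} {A : Matrix (Fin d) (Fin d) ℝ} (hA : A.PosDef) (φ : Fin d → ℝ) :
    (A + vecMulVec φ φ).PosDef := by
  apply hA.add_posSemidef
  simpa using posSemidef_vecMulVec_self_star φ

lemma aux_lin {d : ℕ} {A B : Matrix (Fin d) (Fin d) ℝ} (hA : A.PosDef) (φ : Fin d → ℝ)
    (hB : B = A + vecMulVec φ φ) :
    0 ≤ φ ⬝ᵥ (B⁻¹ *ᵥ φ) ∧ φ ⬝ᵥ (B⁻¹ *ᵥ φ) < 1 ∧ B.det * (1 - φ ⬝ᵥ (B⁻¹ *ᵥ φ)) = A.det ∧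
    (∀ M : Fin d → ℝ, 0 ≤ M ⬝ᵥ (A⁻¹ *ᵥ M) - M ⬝ᵥ (B⁻¹ *ᵥ M) ∧
      (φ ⬝ᵥ (B⁻¹ *ᵥ M)) ^ 2 ≤ M ⬝ᵥ (A⁻¹ *ᵥ M) - M ⬝ᵥ (B⁻¹ *ᵥ M) ∧
      M ⬝ᵥ (A⁻¹ *ᵥ M) - M ⬝ᵥ (B⁻¹ *ᵥ M) ≤ φ ⬝ᵥ (B⁻¹ *ᵥ φ) * (M ⬝ᵥ (A⁻¹ *ᵥ M)) ∧
      ∀ e : ℝ, (M + e • φ) ⬝ᵥ (B⁻¹ *ᵥ (M + e • φ)) =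
        M ⬝ᵥ (B⁻¹ *ᵥ M) + 2 * (φ ⬝ᵥ (B⁻¹ *ᵥ M) * e) + φ ⬝ᵥ (B⁻¹ *ᵥ φ) * e ^ 2) := by
  have hBp : B.PosDef := hB ▸ aux_posdef_step hA φ
  have hAi := hA.inv
  have hBi := hBp.inv
  have hAu : IsUnit A.det := hA.det_pos.ne'.isUnit
  set g := φ ⬝ᵥ (A⁻¹ *ᵥ φ) with hg
  have hg0 : 0 ≤ g := aux_nonneg_dot hAi φ
  have hg1 : 1 + g ≠ 0 := by positivity
  have hvm : φ ᵥ* A⁻¹ = A⁻¹ *ᵥ φ := by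
    have h : (A⁻¹)ᵀ = A⁻¹ := by
      have := hAi.isHermitian
      rw [Matrix.IsHermitian, conjTranspose_eq_transpose_of_trivial] at this
      exact this
    rw [← mulVec_transpose, h]
  have hinv : B⁻¹ = A⁻¹ - (1 + g)⁻¹ • vecMulVec (A⁻¹ *ᵥ φ) (A⁻¹ *ᵥ φ) := by
    apply Matrix.inv_eq_right_inv
    rw [hB, add_mul, mul_sub, mul_sub, Matrix.mul_nonsing_inv _ hAu, Matrix.mul_smul, Matrix.mul_smul,
      mul_vecMulVec, vecMulVec_mul, vecMulVec_mul_vecMulVec, mulVec_mulVec,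
      Matrix.mul_nonsing_inv _ hAu, one_mulVec, hvm, ← hg, vecMulVec_smul, smul_smul]
    have e : (1 + g)⁻¹ * g = 1 - (1 + g)⁻¹ := by field_simp; ring
    rw [e, sub_smul, one_smul]
    abel
  have hdet : B.det = A.det * (1 + g) := by
    rw [hB, vecMulVec_eq Unit, det_add_replicateCol_mul_replicateRow hAu]
    congr 1
    rw [det_unique]
    simp only [Matrix.add_apply, Matrix.one_apply_eq]
    congr 1
    rw [Matrix.mul_assoc, Matrix.mul_apply]
    simp only [hg, dotProduct, replicateRow_apply]
    refine sum_congr rfl fun i _ => ?_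
    congr 1
  have hBx : ∀ x y : Fin d → ℝ, x ⬝ᵥ (B⁻¹ *ᵥ y) = x ⬝ᵥ (A⁻¹ *ᵥ y) -
      (1 + g)⁻¹ * ((φ ⬝ᵥ (A⁻¹ *ᵥ x)) * (φ ⬝ᵥ (A⁻¹ *ᵥ y))) := by
    intro x y
    rw [hinv, sub_mulVec, dotProduct_sub, smul_mulVec, vecMulVec_mulVec, dotProduct_smul]
    simp only [smul_eq_mul, dotProduct_smul, MulOpposite.smul_eq_mul_unop, MulOpposite.unop_op]
    rw [aux_symm_dot hAi φ x, dotProduct_comm (A⁻¹ *ᵥ φ) y, aux_symm_dot hAi φ y]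
  have hf : φ ⬝ᵥ (B⁻¹ *ᵥ φ) = g / (1 + g) := by
    rw [hBx, ← hg]; field_simp; ring
  have h1f : 1 - g / (1 + g) = (1 + g)⁻¹ := by field_simp; ring
  refine ⟨by rw [hf]; positivity, by rw [hf, div_lt_one (by positivity)]; linarith, ?_, ?_⟩
  · rw [hf, hdet, h1f]; field_simp
  · intro M
    have hcs := aux_cs_dot hAi φ M
    rw [← hg] at hcs
    set u := φ ⬝ᵥ (A⁻¹ *ᵥ M) with hu
    have ha : M ⬝ᵥ (A⁻¹ *ᵥ M) - M ⬝ᵥ (B⁻¹ *ᵥ M) = (1 + g)⁻¹ * u ^ 2 := by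
      rw [hBx M M, ← hu]; ring
    have hb : φ ⬝ᵥ (B⁻¹ *ᵥ M) = (1 + g)⁻¹ * u := by
      rw [hBx φ M, ← hg, ← hu]; field_simp; ring
    have hi1 : (1 + g)⁻¹ ≤ 1 := inv_le_one_of_one_le₀ (by linarith)
    have hi0 : 0 ≤ (1 + g)⁻¹ := by positivity
    refine ⟨by rw [ha]; positivity, ?_, ?_, ?_⟩
    · rw [ha, hb, mul_pow]
      have : 0 ≤ u ^ 2 := sq_nonneg u
      have h2 : (1 + g)⁻¹ ^ 2 ≤ (1 + g)⁻¹ := by nlinarith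
      gcongr
    · rw [ha, hf, div_eq_inv_mul, mul_assoc]
      gcongr
    · intro e
      simp only [mulVec_add, mulVec_smul, dotProduct_add, add_dotProduct, dotProduct_smul,
        smul_dotProduct, smul_eq_mul]
      rw [aux_symm_dot hBi M φ]
      ring

lemma aux_quadform_bound {d : ℕ} (Sn : ℕ → Matrix (Fin d) (Fin d) ℝ) (α : ℕ → ℝ)
    (L : Matrix (Fin d) (Fin d) ℝ) (hL : L.PosDef) (hS : ∀ n, (Sn n).PosDef) (hα : ∀ n, 0 < α n)
    (h : Tendsto (fun n => (α n)⁻¹ • Sn n) atTop (𝓝 L)) :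
    ∃ K : ℝ, 0 ≤ K ∧ ∀ n (x : Fin d → ℝ), (Sn n).trace * (x ⬝ᵥ ((Sn n)⁻¹ *ᵥ x)) ≤ K * (x ⬝ᵥ x) := by
  have hinv : Tendsto (fun n => ((α n)⁻¹ • Sn n)⁻¹) atTop (𝓝 L⁻¹) := by
    have hc : ContinuousAt Inv.inv L := by
      apply continuousAt_matrix_inv
      have := NormedRing.inverse_continuousAt (Units.mk0 L.det hL.det_pos.ne')
      simpa using this
    exact hc.tendsto.comp h
  have htr : Tendsto (fun n => ((α n)⁻¹ • Sn n).trace) atTop (𝓝 L.trace) :=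
    ((continuous_id.matrix_trace).tendsto L).comp h
  have hN : Tendsto (fun n => (Sn n).trace • (Sn n)⁻¹) atTop (𝓝 (L.trace • L⁻¹)) := by
    refine (htr.smul hinv).congr fun n => ?_
    have : Invertible (α n)⁻¹ := invertibleOfNonzero (inv_ne_zero (hα n).ne')
    rw [Matrix.inv_smul _ _ (hS n).det_pos.ne'.isUnit, Matrix.trace_smul, smul_smul, invOf_eq_inv,
      inv_inv, smul_eq_mul, mul_comm (α n)⁻¹, mul_assoc, inv_mul_cancel₀ (hα n).ne', mul_one]
  have hb : ∀ i j, ∃ K : ℝ, ∀ n, |((Sn n).trace • (Sn n)⁻¹) i j| ≤ K := by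
    intro i j
    have h1 : Tendsto (fun n => |((Sn n).trace • (Sn n)⁻¹) i j|) atTop (𝓝 |(L.trace • L⁻¹) i j|) := by
      have := ((tendsto_pi_nhds.1 ((tendsto_pi_nhds.1 hN) i)) j).abs
      exact this
    obtain ⟨K, hK⟩ := h1.bddAbove_range
    exact ⟨K, fun n => hK ⟨n, rfl⟩⟩
  choose K hK using hb
  have hK0 : ∀ i j, 0 ≤ K i j := fun i j => (abs_nonneg _).trans (hK i j 0)
  refine ⟨∑ i, ∑ j, K i j, sum_nonneg fun i _ => sum_nonneg fun j _ => hK0 i j, fun n x => ?_⟩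
  have hx : ∀ i, x i ^ 2 ≤ x ⬝ᵥ x := by
    intro i
    have := single_le_sum (f := fun i => x i * x i) (fun i _ => mul_self_nonneg (x i)) (mem_univ i)
    simpa [dotProduct, sq] using this
  calc (Sn n).trace * (x ⬝ᵥ ((Sn n)⁻¹ *ᵥ x)) = x ⬝ᵥ (((Sn n).trace • (Sn n)⁻¹) *ᵥ x) := by
        rw [smul_mulVec, dotProduct_smul, smul_eq_mul]
    _ = ∑ i, ∑ j, x i * (((Sn n).trace • (Sn n)⁻¹) i j * x j) := by
        simp only [dotProduct, mulVec, mul_sum]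
    _ ≤ ∑ i, ∑ j, K i j * (x ⬝ᵥ x) := by
        refine sum_le_sum fun i _ => sum_le_sum fun j _ => ?_
        have h1 : |x i * x j| ≤ x ⬝ᵥ x := by
          rw [abs_le]
          constructor <;> nlinarith [hx i, hx j, sq_nonneg (x i - x j), sq_nonneg (x i + x j)]
        calc x i * (((Sn n).trace • (Sn n)⁻¹) i j * x j)
            ≤ |x i * (((Sn n).trace • (Sn n)⁻¹) i j * x j)| := le_abs_self _
          _ = |((Sn n).trace • (Sn n)⁻¹) i j| * |x i * x j| := by
              rw [← abs_mul]; congr 1; ring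
          _ ≤ _ := by
              gcongr
              · exact hK0 i j
              · exact hK i j n
    _ = _ := by simp only [sum_mul]

/-- log det and log trace asymptotics -/
lemma aux_log_det {d : ℕ} (hd : 0 < d) (Sn : ℕ → Matrix (Fin d) (Fin d) ℝ) (α : ℕ → ℝ)
    (L : Matrix (Fin d) (Fin d) ℝ) (hL : L.PosDef) (hS : ∀ n, (Sn n).PosDef) (hα : ∀ n, 0 < α n)
    (hαt : Tendsto α atTop atTop)
    (h : Tendsto (fun n => (α n)⁻¹ • Sn n) atTop (𝓝 L)) :
    Tendsto (fun n => Real.log (Sn n).det) atTop atTop ∧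
    ∃ c : ℝ, ∀ᶠ n in atTop, Real.log (Sn n).trace ≤ Real.log (Sn n).det + c := by
  have : Nonempty (Fin d) := ⟨⟨0, hd⟩⟩
  have hdet : Tendsto (fun n => ((α n)⁻¹ • Sn n).det) atTop (𝓝 L.det) :=
    ((continuous_id.matrix_det).tendsto L).comp h
  have htr : Tendsto (fun n => ((α n)⁻¹ • Sn n).trace) atTop (𝓝 L.trace) :=
    ((continuous_id.matrix_trace).tendsto L).comp h
  have hld := hdet.log hL.det_pos.ne'
  have hlt := htr.log hL.trace_pos.ne'
  have e1 : ∀ n, Real.log ((α n)⁻¹ • Sn n).det = Real.log (Sn n).det - d * Real.log (α n) := by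
    intro n
    rw [Matrix.det_smul, Fintype.card_fin, Real.log_mul (by have := hα n; positivity) (hS n).det_pos.ne',
      Real.log_pow, Real.log_inv]; ring
  have e2 : ∀ n, Real.log ((α n)⁻¹ • Sn n).trace = Real.log (Sn n).trace - Real.log (α n) := by
    intro n
    rw [Matrix.trace_smul, smul_eq_mul, Real.log_mul (by have := hα n; positivity) (hS n).trace_pos.ne',
      Real.log_inv]; ring
  simp only [e1] at hld
  simp only [e2] at hlt
  have hla : Tendsto (fun n => Real.log (α n)) atTop atTop := Real.tendsto_log_atTop.comp hαt
  have hd1 : (1 : ℝ) ≤ d := by exact_mod_cast hd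
  constructor
  · have h1 : Tendsto (fun n => (d : ℝ) * Real.log (α n)) atTop atTop :=
      hla.const_mul_atTop (by linarith)
    have := h1.atTop_add hld
    refine this.congr fun n => ?_
    ring
  · refine ⟨(Real.log L.trace + 1) - (Real.log L.det - 1), ?_⟩
    filter_upwards [hld.eventually_const_lt (by linarith : Real.log L.det - 1 < Real.log L.det),
      hlt.eventually_lt_const (by linarith : Real.log L.trace < Real.log L.trace + 1),
      hla.eventually_ge_atTop 0] with n a b c
    nlinarith


/-! ### pathwise arguments -/

/-- normalizing sequence -/
noncomputable def auxR (q : ℝ) (γ W : ℕ → ℝ) (n : ℕ) : ℝ :=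
  (1 + ∑ k ∈ range (n + 1), γ k) + partialSups (fun k => W k ^ q) n
    + ∑ k ∈ range (n + 1), γ k * W k ^ q

section path
variable {q : ℝ} {γ W : ℕ → ℝ}

lemma aux_ps_le (W : ℕ → ℝ) (q : ℝ) {k n : ℕ} (h : k ≤ n) :
    W k ^ q ≤ partialSups (fun k => W k ^ q) n := le_partialSups_of_le (fun k => W k ^ q) h

lemma auxR_facts (hγ : ∀ n, 0 ≤ γ n) (hW : ∀ n, 0 ≤ W n) :
    (∀ n, 1 + ∑ k ∈ range (n + 1), γ k * (1 + W k ^ q) ≤ auxR q γ W n) ∧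
    (∀ n, 1 ≤ auxR q γ W n) ∧ Monotone (auxR q γ W) ∧
    (∀ n, partialSups (fun k => W k ^ q) n ≤ auxR q γ W n) ∧
    (∀ n, 1 + ∑ k ∈ range (n + 1), γ k ≤ auxR q γ W n) := by
  have hU : ∀ n, 0 ≤ W n ^ q := fun n => Real.rpow_nonneg (hW n) q
  have hP : ∀ n, 0 ≤ partialSups (fun k => W k ^ q) n := fun n =>
    (hU n).trans (aux_ps_le W q le_rfl)
  have hG : ∀ n, 0 ≤ ∑ k ∈ range (n + 1), γ k := fun n => sum_nonneg fun _ _ => hγ _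
  have hQ : ∀ n, 0 ≤ ∑ k ∈ range (n + 1), γ k * W k ^ q := fun n =>
    sum_nonneg fun k _ => mul_nonneg (hγ k) (hU k)
  refine ⟨fun n => ?_, fun n => ?_, ?_, fun n => ?_, fun n => ?_⟩
  · simp only [auxR, mul_add, mul_one, sum_add_distrib]
    linarith [hP n]
  · simp only [auxR]; linarith [hP n, hG n, hQ n]
  · refine monotone_nat_of_le_succ fun n => ?_
    simp only [auxR]
    rw [sum_range_succ γ (n + 1), sum_range_succ (fun k => γ k * W k ^ q) (n + 1)]
    have h1 := (partialSups (fun k => W k ^ q)).monotone (Nat.le_succ n)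
    have h2 := mul_nonneg (hγ (n + 1)) (hU (n + 1))
    have h3 := hγ (n + 1)
    simp only [Nat.succ_eq_add_one] at h1
    linarith
  · simp only [auxR]; linarith [hP n, hG n, hQ n]
  · simp only [auxR]; linarith [hP n, hG n, hQ n]

lemma aux_sum_generic (hγ : ∀ n, 0 ≤ γ n) (hW : ∀ n, 0 ≤ W n) {r C : ℝ} (hr : 1 < r)
    {y : ℕ → ℝ} (hy : ∀ n, |y n| ^ r ≤ C * (γ n * (1 + W n ^ q))) :
    Summable fun n => |y n / auxR q γ W n| ^ r := by
  obtain ⟨h1, h2, -, -, -⟩ := auxR_facts (q := q) hγ hW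
  have hs := (aux_summable hr (fun n => mul_nonneg (hγ n)
    (by have := Real.rpow_nonneg (hW n) q; linarith)) h1).mul_left C
  refine Summable.of_nonneg_of_le (fun n => by positivity) (fun n => ?_) hs
  have hR : 0 < auxR q γ W n := by linarith [h2 n]
  rw [abs_div, abs_of_pos hR, Real.div_rpow (abs_nonneg _) hR.le, ← mul_div_assoc]
  gcongr
  exact hy n

lemma aux_sum_c (hq : 1 < q) (hγ : ∀ n, 0 ≤ γ n) (hγ1 : ∀ n, γ n ≤ 1) (hW : ∀ n, 0 ≤ W n) {x : ℕ → ℝ}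
    (hx : ∀ n, x n ^ 2 ≤ (1 - γ n) * W n * γ n) :
    Summable fun n => |2 * q * ((1 - γ n) * W n) ^ (q - 1) * x n / auxR q γ W n| ^ (2 : ℝ) := by
  obtain ⟨h1, h2, -, h4, -⟩ := auxR_facts (q := q) hγ hW
  have hq1 : 0 < 1 / q := by positivity
  have hs := (aux_summable (s := 1 + 1 / q) (by linarith) (fun n => mul_nonneg (hγ n)
    (by have := Real.rpow_nonneg (hW n) q; linarith)) h1).mul_left (4 * q ^ 2)
  refine Summable.of_nonneg_of_le (fun n => by positivity) (fun n => ?_) hs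
  have hR : 0 < auxR q γ W n := by linarith [h2 n]
  have hA : 0 ≤ (1 - γ n) * W n := mul_nonneg (by linarith [hγ1 n]) (hW n)
  have hAW : (1 - γ n) * W n ≤ W n := by nlinarith [hγ n, hW n]
  have hU := Real.rpow_nonneg (hW n) q
  have hUR : W n ^ q ≤ auxR q γ W n := (aux_ps_le W q le_rfl).trans (h4 n)
  have e2 : |2 * q * ((1 - γ n) * W n) ^ (q - 1) * x n / auxR q γ W n| ^ (2 : ℝ) =
      4 * q ^ 2 * ((((1 - γ n) * W n) ^ (q - 1)) ^ 2 * x n ^ 2) / auxR q γ W n ^ 2 := by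
    rw [Real.rpow_two, sq_abs]; ring
  rw [e2, mul_div_assoc]
  refine mul_le_mul_of_nonneg_left ?_ (by positivity)
  -- key: (A^(q-1))^2 * x^2 ≤ γ W^q W^(q-1)
  have k1 : (((1 - γ n) * W n) ^ (q - 1)) ^ 2 * x n ^ 2 ≤ γ n * W n ^ q * W n ^ (q - 1) := by
    have a1 : ((1 - γ n) * W n) ^ (q - 1) ≤ W n ^ (q - 1) := Real.rpow_le_rpow hA hAW (by linarith)
    have a0 : 0 ≤ ((1 - γ n) * W n) ^ (q - 1) := Real.rpow_nonneg hA _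
    have a2 : x n ^ 2 ≤ W n * γ n := (hx n).trans (mul_le_mul_of_nonneg_right hAW (hγ n))
    have a3 : W n ^ (q - 1) * W n = W n ^ q := by
      rcases eq_or_lt_of_le (hW n) with h | h
      · rw [← h, Real.zero_rpow (by linarith : q ≠ 0)]; simp
      · rw [Real.rpow_sub_one h.ne']; field_simp
    calc _ ≤ (W n ^ (q - 1)) ^ 2 * (W n * γ n) := by gcongr
      _ = γ n * (W n ^ (q - 1) * W n) * W n ^ (q - 1) := by ring
      _ = _ := by rw [a3]
  have k2 : W n ^ (q - 1) ≤ auxR q γ W n ^ (1 - 1 / q) := by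
    have : W n ^ (q - 1) = (W n ^ q) ^ (1 - 1 / q) := by
      rw [← Real.rpow_mul (hW n)]; congr 1; field_simp
    rw [this]
    apply Real.rpow_le_rpow hU hUR
    have : 1 / q ≤ 1 := by rw [div_le_one (by linarith)]; exact hq.le
    linarith
  have k3 : auxR q γ W n ^ 2 = auxR q γ W n ^ (1 - 1 / q) * auxR q γ W n ^ (1 + 1 / q) := by
    rw [← Real.rpow_add hR, ← Real.rpow_two]; congr 1; ring
  rw [k3, div_le_div_iff₀ (by positivity) (by positivity)]
  have hp1 : 0 ≤ auxR q γ W n ^ (1 + 1 / q) := by positivity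
  calc _ ≤ γ n * W n ^ q * W n ^ (q - 1) * auxR q γ W n ^ (1 + 1 / q) := by gcongr
    _ ≤ γ n * (1 + W n ^ q) * auxR q γ W n ^ (1 - 1 / q) * auxR q γ W n ^ (1 + 1 / q) := by
      have := hγ n
      have hw1 := Real.rpow_nonneg (hW n) (q - 1)
      gcongr
      linarith
    _ = _ := by ring

lemma aux_lo_bound {E R : ℕ → ℝ} (hR : ∀ n, 1 ≤ R n) (h : Tendsto (fun n => E n / R n) atTop (𝓝 0))
    {δ : ℝ} (hδ : 0 < δ) : ∃ K : ℝ, 0 ≤ K ∧ ∀ n, E n ≤ δ * R n + K := by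
  obtain ⟨N, hN⟩ := eventually_atTop.1 (h.eventually_lt_const hδ)
  refine ⟨∑ k ∈ range N, |E k|, sum_nonneg fun _ _ => abs_nonneg _, fun n => ?_⟩
  have hp : 0 < R n := by linarith [hR n]
  have h0 : 0 ≤ ∑ k ∈ range N, |E k| := sum_nonneg fun _ _ => abs_nonneg _
  rcases lt_or_ge n N with hn | hn
  · have := single_le_sum (f := fun k => |E k|) (fun _ _ => abs_nonneg _) (mem_range.2 hn)
    have h2 := le_abs_self (E n)
    have : 0 < δ * R n := by positivity
    linarith
  · have := hN n hn
    rw [div_lt_iff₀ hp] at this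
    linarith

lemma aux_growth (hq : 1 < q) (hγ : ∀ n, 0 ≤ γ n) (hγ1 : ∀ n, γ n ≤ 1) (hW : ∀ n, 0 ≤ W n)
    {x e m : ℕ → ℝ} {Cm : ℝ}
    (hx : ∀ n, x n ^ 2 ≤ (1 - γ n) * W n * γ n)
    (hrec : ∀ n, W (n + 1) = (1 - γ n) * W n + 2 * (e n * x n) + e n ^ 2 * γ n)
    (hm : ∀ n, m n ≤ Cm)
    (h1 : Tendsto (fun n => (∑ k ∈ range (n + 1), (2 * q * ((1 - γ k) * W k) ^ (q - 1) * x k) * e k)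
      / auxR q γ W n) atTop (𝓝 0))
    (h2 : Tendsto (fun n => (∑ k ∈ range (n + 1), γ k * ((e k ^ 2) ^ q - m k)) / auxR q γ W n)
      atTop (𝓝 0)) :
    ∃ K : ℝ, 0 ≤ K ∧ ∀ n, auxR q γ W n ≤ K * (1 + ∑ k ∈ range (n + 1), γ k) := by
  obtain ⟨-, hR1, hRm, -, -⟩ := auxR_facts (q := q) hγ hW
  have hU : ∀ n, 0 ≤ W n ^ q := fun n => Real.rpow_nonneg (hW n) q
  obtain ⟨C, hC, hstep⟩ := aux_step hq
  set Cm' := max Cm 0 with hCm'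
  obtain ⟨K1, hK1, hE1⟩ := aux_lo_bound hR1 h1 (δ := 1 / 12) (by norm_num)
  obtain ⟨K2, hK2, hE2⟩ := aux_lo_bound hR1 h2 (δ := 1 / (12 * (C + 1))) (by positivity)
  -- summed inequality
  have hsum : ∀ n, W (n + 1) ^ q + 1 / 2 * ∑ k ∈ range (n + 1), γ k * W k ^ q ≤ W 0 ^ q +
      (∑ k ∈ range (n + 1), (2 * q * ((1 - γ k) * W k) ^ (q - 1) * x k) * e k) +
      C * ∑ k ∈ range (n + 1), γ k * (e k ^ 2) ^ q := by
    have h : ∀ n, W n ^ q + 1 / 2 * ∑ k ∈ range n, γ k * W k ^ q ≤ W 0 ^ q +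
      (∑ k ∈ range n, (2 * q * ((1 - γ k) * W k) ^ (q - 1) * x k) * e k) +
      C * ∑ k ∈ range n, γ k * (e k ^ 2) ^ q := by
      intro n
      induction n with
      | zero => simp
      | succ n ih =>
        have := hstep (W n) (γ n) (x n) (e n) (hW n) (hγ n) (hγ1 n) (hx n)
        rw [← hrec] at this
        simp only [sum_range_succ]
        linarith
    intro n
    exact h (n + 1)
  set G : ℕ → ℝ := fun n => 1 + ∑ k ∈ range (n + 1), γ k with hG
  have hG1 : ∀ n, 1 ≤ G n := fun n => by
    have : 0 ≤ ∑ k ∈ range (n + 1), γ k := sum_nonneg fun _ _ => hγ _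
    simp only [hG]; linarith
  have hGm : Monotone G := by
    refine monotone_nat_of_le_succ fun n => ?_
    simp only [hG]; rw [sum_range_succ γ (n + 1)]; linarith [hγ (n + 1)]
  have hT2 : ∀ n, C * ∑ k ∈ range (n + 1), γ k * (e k ^ 2) ^ q ≤
      1 / 12 * auxR q γ W n + C * K2 + C * Cm' * G n := by
    intro n
    have a1 : ∑ k ∈ range (n + 1), γ k * (e k ^ 2) ^ q =
        ∑ k ∈ range (n + 1), γ k * ((e k ^ 2) ^ q - m k) + ∑ k ∈ range (n + 1), γ k * m k := by
      rw [← sum_add_distrib]; exact sum_congr rfl fun k _ => by ring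
    have a2 : ∑ k ∈ range (n + 1), γ k * m k ≤ Cm' * G n := by
      calc _ ≤ ∑ k ∈ range (n + 1), γ k * Cm' := by
            refine sum_le_sum fun k _ => ?_
            have := (hm k).trans (le_max_left Cm 0)
            exact mul_le_mul_of_nonneg_left this (hγ k)
        _ = Cm' * ∑ k ∈ range (n + 1), γ k := by rw [← sum_mul, mul_comm]
        _ ≤ _ := by
          have : 0 ≤ Cm' := le_max_right _ _
          simp only [hG]
          gcongr; linarith
    have a3 : C * (1 / (12 * (C + 1)) * auxR q γ W n) ≤ 1 / 12 * auxR q γ W n := by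
      have : C * (1 / (12 * (C + 1))) ≤ 1 / 12 := by
        rw [mul_one_div, div_le_div_iff₀ (by positivity) (by positivity)]; linarith
      have := hR1 n
      nlinarith
    have a4 := mul_le_mul_of_nonneg_left (hE2 n) hC
    have a5 := mul_le_mul_of_nonneg_left a2 hC
    rw [a1, mul_add]
    linarith
  set K3 := W 0 ^ q + K1 + C * K2 with hK3
  have hK30 : 0 ≤ K3 := by have := hU 0; positivity
  have hCC : 0 ≤ C * Cm' := mul_nonneg hC (le_max_right _ _)
  have hall : ∀ n, W (n + 1) ^ q + 1 / 2 * ∑ k ∈ range (n + 1), γ k * W k ^ q ≤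
      1 / 6 * auxR q γ W n + C * Cm' * G n + K3 := by
    intro n
    have := hsum n; have := hE1 n; have := hT2 n
    linarith
  have hQ : ∀ n, 0 ≤ ∑ k ∈ range (n + 1), γ k * W k ^ q := fun n =>
    sum_nonneg fun k _ => mul_nonneg (hγ k) (hU k)
  have hmax : ∀ n, partialSups (fun k => W k ^ q) n ≤ 1 / 6 * auxR q γ W n + C * Cm' * G n + K3 := by
    intro n
    apply partialSups_le
    intro k hk
    rcases k with _ | k
    · have := hR1 n
      have := hG1 n
      have : 0 ≤ C * Cm' * G n := mul_nonneg hCC (by linarith)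
      have : 0 ≤ C * K2 := by positivity
      simp only [hK3]; linarith
    · have a1 := hall k
      have a2 := hRm (show k ≤ n by omega)
      have a3 := mul_le_mul_of_nonneg_left (hGm (show k ≤ n by omega)) hCC
      have := hQ k
      linarith
  refine ⟨2 * (1 + 3 * (C * Cm') + 3 * K3), by positivity, fun n => ?_⟩
  have b1 := hmax n
  have b2 := hall n
  have b3 := hU (n + 1)
  have b4 : auxR q γ W n = G n + partialSups (fun k => W k ^ q) n
    + ∑ k ∈ range (n + 1), γ k * W k ^ q := rfl
  have b5 := hG1 n
  have b6 : K3 ≤ K3 * G n := by nlinarith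
  change _ ≤ _ * G n
  linarith

end path

lemma aux_sum_f {f D : ℕ → ℝ} (hf0 : ∀ n, 0 ≤ f n) (hf1 : ∀ n, f n < 1)
    (hft : Tendsto f atTop (𝓝 0)) (hD : ∀ n, D (n + 1) - D n = -Real.log (1 - f n))
    (hDt : Tendsto D atTop atTop) :
    Tendsto (fun n => (∑ k ∈ range n, f k) / D n) atTop (𝓝 1) := by
  set g : ℕ → ℝ := fun n => -Real.log (1 - f n) with hg
  have hfg : ∀ n, f n ≤ g n := fun n => by
    have := Real.log_le_sub_one_of_pos (by linarith [hf1 n] : 0 < 1 - f n)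
    simp only [hg]; linarith
  have hg0 : 0 ≤ g := fun n => (hf0 n).trans (hfg n)
  have hsg : ∀ n, ∑ k ∈ range n, g k = D n - D 0 := fun n => by
    rw [← sum_range_sub]; exact sum_congr rfl fun k _ => (hD k).symm
  have ho : (fun x : ℝ => -Real.log (1 - x) - x) =o[𝓝 0] (fun x : ℝ => x) := by
    have h1 : HasDerivAt (fun x : ℝ => -Real.log (1 - x)) 1 0 := by
      have := (((hasDerivAt_id' (0 : ℝ)).const_sub 1).log (by norm_num)).fun_neg
      simpa using this
    have := h1.isLittleO
    simpa using this
  have ho1 : (fun n => g n - f n) =o[atTop] f := ho.comp_tendsto hft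
  have ho2 : (fun n => g n - f n) =o[atTop] g := by
    refine ho1.trans_isBigO (Asymptotics.IsBigO.of_bound 1 (Eventually.of_forall fun n => ?_))
    rw [Real.norm_of_nonneg (hf0 n), Real.norm_of_nonneg (hg0 n)]
    linarith [hfg n]
  have hsgt : Tendsto (fun n => ∑ k ∈ range n, g k) atTop atTop := by
    simp only [hsg]; exact tendsto_atTop_add_const_right _ _ hDt
  have ho3 := (ho2.sum_range hg0 hsgt).tendsto_div_nhds_zero
  have t1 : Tendsto (fun n => (D n - D 0) / D n) atTop (𝓝 1) := by
    have : Tendsto (fun n => 1 - D 0 / D n) atTop (𝓝 (1 - 0)) :=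
      (hDt.const_div_atTop (D 0)).const_sub 1
    rw [sub_zero] at this
    refine this.congr' ?_
    filter_upwards [hDt.eventually_gt_atTop 0] with n hn
    field_simp
  have := (ho3.const_sub 1).mul t1
  rw [sub_zero, mul_one] at this
  refine this.congr' ?_
  filter_upwards [hDt.eventually_gt_atTop 0, hsgt.eventually_gt_atTop 0] with n hn hn'
  have e : ∑ k ∈ range n, (g k - f k) = (D n - D 0) - ∑ k ∈ range n, f k := by
    rw [sum_sub_distrib, hsg]
  rw [hsg] at hn'
  rw [e, hsg]
  field_simp
  ring

lemma aux_G_tendsto {f γ D : ℕ → ℝ} {K : ℝ} (hK : 0 ≤ K)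
    (hfγ : ∀ n, f n ≤ K * γ n) (hDt : Tendsto D atTop atTop)
    (h : Tendsto (fun n => (∑ k ∈ range n, f k) / D n) atTop (𝓝 1)) :
    Tendsto (fun n => ∑ k ∈ range n, γ k) atTop atTop := by
  have hf : Tendsto (fun n => ∑ k ∈ range n, f k) atTop atTop := by
    have := hDt.atTop_mul_pos one_pos h
    refine this.congr' ?_
    filter_upwards [hDt.eventually_gt_atTop 0] with n hn
    field_simp
  have h2 : Tendsto (fun n => (K + 1) * ∑ k ∈ range n, γ k + ∑ k ∈ range n, -γ k) atTop atTop := by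
    refine tendsto_atTop_mono (fun n => ?_) hf
    rw [mul_sum, ← sum_add_distrib]
    refine sum_le_sum fun k _ => ?_
    linarith [hfγ k]
  have h3 : Tendsto (fun n => K * ∑ k ∈ range n, γ k) atTop atTop := by
    refine h2.congr fun n => ?_
    rw [sum_neg_distrib]; ring
  have hK' : 0 < K := by
    rcases eq_or_lt_of_le hK with h0 | h0
    · rw [← h0] at h3; simp at h3
      exact absurd h3 (not_tendsto_const_atTop _ _)
    · exact h0
  exact (tendsto_const_mul_atTop_of_pos hK').1 h3


/-! ### final pathwise argument -/

lemma aux_final {f γ W V a b e D : ℕ → ℝ} {q K K1 σ : ℝ} {p : ℕ} (hp : 1 ≤ p) (hq : 1 < q)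
    (hpq : (p : ℝ) ≤ q)
    (hf0 : ∀ n, 0 ≤ f n) (hf1 : ∀ n, f n < 1) (hft : Tendsto f atTop (𝓝 0))
    (hD : ∀ n, D (n + 1) - D n = -Real.log (1 - f n)) (hDt : Tendsto D atTop atTop)
    (hγ : ∀ n, 0 ≤ γ n) (hW : ∀ n, 0 ≤ W n)
    (hK : 0 ≤ K) (hfγ : ∀ n, f n ≤ K * γ n) (hV0 : ∀ n, 0 ≤ V n) (hVW : ∀ n, V n ≤ K * W n)
    (ha0 : ∀ n, 0 ≤ a n) (haf : ∀ n, a n ≤ f n * V n)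
    (hVr : ∀ n, V (n + 1) = V n - a n + 2 * (b n * e n) + f n * e n ^ 2)
    (hRD : ∀ᶠ n in atTop, auxR q γ W n ≤ K1 * D (n + 1))
    (hRD' : ∀ᶠ n in atTop, auxR q γ W (n + 1) ≤ K1 * D (n + 1))
    (h3 : Tendsto (fun n => (∑ k ∈ range (n + 1), b k * e k) / auxR q γ W n) atTop (𝓝 0))
    (h4 : Tendsto (fun n => (∑ k ∈ range (n + 1), f k * (e k ^ 2 - σ ^ 2)) / auxR q γ W n)
      atTop (𝓝 0)) :
    Tendsto (fun n => (D (n + 1))⁻¹ * ∑ k ∈ Icc 1 n, a k ^ p) atTop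
      (𝓝 (if p = 1 then σ ^ 2 else 0)) := by
  obtain ⟨hR0, hR1, hRm, hRps, -⟩ := auxR_facts (q := q) hγ hW
  have hU : ∀ n, 0 ≤ W n ^ q := fun n => Real.rpow_nonneg (hW n) q
  have hD1t : Tendsto (fun n => D (n + 1)) atTop atTop := (tendsto_add_atTop_iff_nat 1).2 hDt
  have hDi : Tendsto (fun n => (D (n + 1))⁻¹) atTop (𝓝 0) := tendsto_inv_atTop_zero.comp hD1t
  -- reduce to sums over range
  suffices H : Tendsto (fun n => (D (n + 1))⁻¹ * ∑ k ∈ range (n + 1), a k ^ p) atTop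
      (𝓝 (if p = 1 then σ ^ 2 else 0)) by
    have := H.sub (hDi.mul_const (a 0 ^ p))
    rw [zero_mul, sub_zero] at this
    refine this.congr fun n => ?_
    have : ∑ k ∈ range (n + 1), a k ^ p = a 0 ^ p + ∑ k ∈ Icc 1 n, a k ^ p := by
      rw [range_eq_Ico, sum_eq_sum_Ico_succ_bot (Nat.succ_pos n)]
      rfl
    rw [this]; ring
  -- transfer from R to D
  have hRbdd : ∀ E : ℕ → ℝ, Tendsto (fun n => E n / auxR q γ W n) atTop (𝓝 0) →
      Tendsto (fun n => (D (n + 1))⁻¹ * E n) atTop (𝓝 0) := by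
    intro E hE
    refine squeeze_zero_norm' (a := fun n => K1 * |E n / auxR q γ W n|) ?_ ?_
    · filter_upwards [hRD, hD1t.eventually_gt_atTop 0] with n hn hDn
      have hRp : 0 < auxR q γ W n := by linarith [hR1 n]
      rw [Real.norm_eq_abs, abs_mul, abs_inv, abs_of_pos hDn, abs_div, abs_of_pos hRp,
        inv_mul_eq_div, ← mul_div_assoc, div_le_div_iff₀ hDn hRp]
      nlinarith [abs_nonneg (E n)]
    · simpa using (hE.abs).const_mul K1
  rcases eq_or_lt_of_le hp with hp1 | hp2
  · rw [if_pos hp1.symm]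
    subst hp1
    have hVsum : ∀ n, ∑ k ∈ range n, a k ^ 1 = V 0 - V n + 2 * ∑ k ∈ range n, b k * e k
        + ∑ k ∈ range n, f k * (e k ^ 2 - σ ^ 2) + σ ^ 2 * ∑ k ∈ range n, f k := by
      intro n
      induction n with
      | zero => simp
      | succ n ih =>
        simp only [sum_range_succ]
        rw [ih, hVr]; ring
    have hfs := (tendsto_add_atTop_iff_nat 1).2 (aux_sum_f hf0 hf1 hft hD hDt)
    have hVt : Tendsto (fun n => (D (n + 1))⁻¹ * V (n + 1)) atTop (𝓝 0) := by
      have hpow : Tendsto (fun n => D (n + 1) ^ (-(1 - 1 / q))) atTop (𝓝 0) := by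
        have : 1 / q < 1 := by rw [div_lt_one (by linarith)]; exact hq
        exact (tendsto_rpow_neg_atTop (by linarith)).comp hD1t
      have hpow' := hpow.const_mul (K * K1 ^ (1 / q))
      rw [mul_zero] at hpow'
      refine squeeze_zero_norm' ?_ hpow'
      filter_upwards [hRD', hD1t.eventually_gt_atTop 0] with n hn hDn
      have hq0 : (0 : ℝ) < q := by linarith
      have hK1 : 0 ≤ K1 := by
        have := hR1 (n + 1)
        by_contra hcon
        push Not at hcon
        nlinarith
      have hWU : W (n + 1) ≤ K1 ^ (1 / q) * D (n + 1) ^ (1 / q) := by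
        have h1 : W (n + 1) ^ q ≤ K1 * D (n + 1) :=
          ((aux_ps_le W q le_rfl).trans (hRps (n + 1))).trans hn
        have h2 := Real.rpow_le_rpow (hU (n + 1)) h1 (by positivity : 0 ≤ 1 / q)
        rw [← Real.rpow_mul (hW _), mul_one_div_cancel hq0.ne', Real.rpow_one,
          Real.mul_rpow hK1 hDn.le] at h2
        exact h2
      rw [Real.norm_of_nonneg (mul_nonneg (inv_nonneg.2 hDn.le) (hV0 _))]
      have e1 : D (n + 1) ^ (-(1 - 1 / q)) = (D (n + 1))⁻¹ * D (n + 1) ^ (1 / q) := by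
        rw [← Real.rpow_neg_one, ← Real.rpow_add hDn]; congr 1; ring
      rw [e1]
      calc _ ≤ (D (n + 1))⁻¹ * (K * (K1 ^ (1 / q) * D (n + 1) ^ (1 / q))) := by
            have := hVW (n + 1)
            gcongr
            exact this.trans (by gcongr)
        _ = _ := by ring
    have key := ((((hDi.mul_const (V 0)).sub hVt).add ((hRbdd _ h3).const_mul 2)).add
      (hRbdd _ h4)).add (hfs.const_mul (σ ^ 2))
    simp only [zero_mul, sub_zero, mul_zero, add_zero, zero_add, mul_one] at key
    refine key.congr fun n => ?_
    rw [hVsum]; ring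
  · rw [if_neg (by omega)]
    set g : ℕ → ℝ := fun n => γ n * (1 + W n ^ q) with hg
    have hg0 : ∀ n, 0 ≤ g n := fun n => mul_nonneg (hγ n) (by linarith [hU n])
    have hWp : ∀ n, W n ^ p ≤ 1 + W n ^ q := by
      intro n
      rcases le_total (W n) 1 with h | h
      · have := pow_le_one₀ (n := p) (hW n) h
        linarith [hU n]
      · have := Real.rpow_le_rpow_of_exponent_le h hpq
        rw [Real.rpow_natCast] at this
        linarith
    have hap : ∀ n, a n ^ p ≤ K ^ (p + 1) * f n ^ (p - 1) * g n := by
      intro n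
      have e0 : p = (p - 1) + 1 := by omega
      have h1 : a n ≤ f n * (K * W n) := (haf n).trans (mul_le_mul_of_nonneg_left (hVW n) (hf0 n))
      have h2 : a n ^ p ≤ (f n * (K * W n)) ^ p := pow_le_pow_left₀ (ha0 n) h1 p
      have h3 : (f n * (K * W n)) ^ p = K ^ p * (f n ^ (p - 1) * (f n * W n ^ p)) := by
        rw [mul_pow, mul_pow]
        have : f n ^ p = f n ^ (p - 1) * f n := by rw [← pow_succ, ← e0]
        rw [this]; ring
      rw [h3] at h2
      refine h2.trans ?_
      have hWn := pow_nonneg (hW n) p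
      have hfn := pow_nonneg (hf0 n) (p - 1)
      have h4 : f n * W n ^ p ≤ K * γ n * (1 + W n ^ q) :=
        mul_le_mul (hfγ n) (hWp n) hWn (mul_nonneg hK (hγ n))
      calc _ ≤ K ^ p * (f n ^ (p - 1) * (K * γ n * (1 + W n ^ q))) := by gcongr
        _ = _ := by simp only [hg]; ring
    -- weighted sums
    have hfp : Tendsto (fun n => K ^ (p + 1) * f n ^ (p - 1)) atTop (𝓝 0) := by
      have := (hft.pow (p - 1)).const_mul (K ^ (p + 1))
      rwa [zero_pow (by omega), mul_zero] at this
    have hs0 : ∀ n, 0 ≤ ∑ k ∈ range (n + 1), a k ^ p := fun n =>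
      sum_nonneg fun k _ => pow_nonneg (ha0 k) p
    rw [Metric.tendsto_atTop]
    intro δ hδ
    set δ' := δ / (2 * (|K1| + 1)) with hδ'
    have hδ'0 : 0 < δ' := by positivity
    obtain ⟨N, hN⟩ := eventually_atTop.1 (hfp.eventually_le_const hδ'0)
    set A := ∑ k ∈ range N, a k ^ p with hA
    have hA0 : 0 ≤ A := sum_nonneg fun k _ => pow_nonneg (ha0 k) p
    have hbd : ∀ n, ∑ k ∈ range n, a k ^ p ≤ A + δ' * ∑ k ∈ range n, g k := by
      intro n
      have hgs : 0 ≤ ∑ k ∈ range n, g k := sum_nonneg fun k _ => hg0 k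
      rcases le_total n N with h | h
      · have : ∑ k ∈ range n, a k ^ p ≤ A :=
          sum_le_sum_of_subset_of_nonneg (range_mono h) fun k _ _ => pow_nonneg (ha0 k) p
        nlinarith
      · induction n, h using Nat.le_induction with
        | base => nlinarith
        | succ n hn ih =>
          have ih' := ih (sum_nonneg fun k _ => hg0 k)
          rw [sum_range_succ, sum_range_succ g]
          have := (hap n).trans (mul_le_mul_of_nonneg_right (hN n hn) (hg0 n))
          linarith
    have hev := (hDi.mul_const A).eventually_lt_const
      (show (0 : ℝ) * A < δ / 2 by rw [zero_mul]; positivity)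
    have hev2 := hRD.and (hev.and (hD1t.eventually_gt_atTop 0))
    obtain ⟨N2, hN2⟩ := eventually_atTop.1 hev2
    refine ⟨N2, fun n hn => ?_⟩
    obtain ⟨c1, c2, c3⟩ := hN2 n hn
    rw [Real.dist_eq, sub_zero, abs_of_nonneg (mul_nonneg (inv_nonneg.2 c3.le) (hs0 n))]
    have d1 : ∑ k ∈ range (n + 1), g k ≤ |K1| * D (n + 1) := by
      have := hR0 n
      have h5 : K1 * D (n + 1) ≤ |K1| * D (n + 1) :=
        mul_le_mul_of_nonneg_right (le_abs_self _) c3.le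
      simp only [hg]
      linarith
    have d2 : δ' * |K1| ≤ δ / 2 := by
      rw [hδ', div_mul_eq_mul_div, div_le_div_iff₀ (by positivity) (by positivity)]
      nlinarith [abs_nonneg K1]
    calc _ ≤ (D (n + 1))⁻¹ * (A + δ' * (|K1| * D (n + 1))) := by
          have := hbd (n + 1)
          have hi := inv_nonneg.2 c3.le
          refine mul_le_mul_of_nonneg_left (this.trans ?_) hi
          gcongr
      _ = (D (n + 1))⁻¹ * A + δ' * |K1| := by field_simp
      _ < δ := by linarith


/-! ### deterministic facts along one path -/

section path2
variable {d : ℕ} {A : ℕ → Matrix (Fin d) (Fin d) ℝ} {φ M : ℕ → Fin d → ℝ} {e : ℕ → ℝ}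

lemma aux_path_trace (hAs : ∀ n, A (n + 1) = A n + vecMulVec (φ n) (φ n)) (n : ℕ) :
    (A (n + 1)).trace = (A n).trace + φ n ⬝ᵥ φ n := by
  rw [hAs, trace_add, trace_vecMulVec]

lemma aux_path1 (hd : 0 < d) (hA : ∀ n, (A n).PosDef)
    (hAs : ∀ n, A (n + 1) = A n + vecMulVec (φ n) (φ n)) (n : ℕ) :
    0 < (A n).trace ∧ 0 ≤ φ n ⬝ᵥ φ n / (A (n + 1)).trace ∧
    φ n ⬝ᵥ φ n / (A (n + 1)).trace ≤ 1 ∧ 0 ≤ M n ⬝ᵥ M n / (A n).trace ∧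
    (M n ⬝ᵥ φ n / (A (n + 1)).trace) ^ 2 ≤ (1 - φ n ⬝ᵥ φ n / (A (n + 1)).trace) *
      (M n ⬝ᵥ M n / (A n).trace) * (φ n ⬝ᵥ φ n / (A (n + 1)).trace) := by
  have : Nonempty (Fin d) := ⟨⟨0, hd⟩⟩
  have h0 : 0 < (A n).trace := (hA n).trace_pos
  have h1 : 0 < (A (n + 1)).trace := (hA (n + 1)).trace_pos
  have ht := aux_path_trace hAs n
  have hφ := aux_dot_nonneg (φ n)
  have hM := aux_dot_nonneg (M n)
  refine ⟨h0, by positivity, ?_, by positivity, ?_⟩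
  · rw [div_le_one h1]; linarith
  · have hc := aux_dot_cs (M n) (φ n)
    have e1 : (1 - φ n ⬝ᵥ φ n / (A (n + 1)).trace) * (M n ⬝ᵥ M n / (A n).trace) =
        M n ⬝ᵥ M n / (A (n + 1)).trace := by
      have : φ n ⬝ᵥ φ n = (A (n + 1)).trace - (A n).trace := by linarith
      rw [this]; field_simp; ring
    rw [e1, div_pow, div_mul_div_comm, ← sq]
    gcongr

lemma aux_path_rec (hd : 0 < d) (hA : ∀ n, (A n).PosDef)
    (hAs : ∀ n, A (n + 1) = A n + vecMulVec (φ n) (φ n))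
    (hM : ∀ n, M (n + 1) = M n + e n • φ n) (n : ℕ) :
    M (n + 1) ⬝ᵥ M (n + 1) / (A (n + 1)).trace = (1 - φ n ⬝ᵥ φ n / (A (n + 1)).trace) *
      (M n ⬝ᵥ M n / (A n).trace) + 2 * (e n * (M n ⬝ᵥ φ n / (A (n + 1)).trace))
      + e n ^ 2 * (φ n ⬝ᵥ φ n / (A (n + 1)).trace) := by
  have : Nonempty (Fin d) := ⟨⟨0, hd⟩⟩
  have h0 : 0 < (A n).trace := (hA n).trace_pos
  have h1 : 0 < (A (n + 1)).trace := (hA (n + 1)).trace_pos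
  have ht := aux_path_trace hAs n
  have e1 : (1 - φ n ⬝ᵥ φ n / (A (n + 1)).trace) * (M n ⬝ᵥ M n / (A n).trace) =
      M n ⬝ᵥ M n / (A (n + 1)).trace := by
    have : φ n ⬝ᵥ φ n = (A (n + 1)).trace - (A n).trace := by linarith
    rw [this]; field_simp; ring
  rw [e1, hM]
  simp only [add_dotProduct, dotProduct_add, smul_dotProduct, dotProduct_smul, smul_eq_mul]
  rw [dotProduct_comm (φ n) (M n)]
  field_simp
  ring

lemma aux_path2 (hd : 0 < d) (hA : ∀ n, (A n).PosDef)
    (hAs : ∀ n, A (n + 1) = A n + vecMulVec (φ n) (φ n))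
    {α : ℕ → ℝ} {L : Matrix (Fin d) (Fin d) ℝ} (hL : L.PosDef) (hα : ∀ n, 0 < α n)
    (hαt : Tendsto α atTop atTop) (hc : Tendsto (fun n => (α n)⁻¹ • A n) atTop (𝓝 L)) :
    (∃ K : ℝ, 0 ≤ K ∧ (∀ n, φ n ⬝ᵥ ((A (n + 1))⁻¹ *ᵥ φ n) ≤ K * (φ n ⬝ᵥ φ n / (A (n + 1)).trace))
      ∧ ∀ (n : ℕ) (x : Fin d → ℝ), x ⬝ᵥ ((A n)⁻¹ *ᵥ x) ≤ K * (x ⬝ᵥ x / (A n).trace)) ∧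
    Tendsto (fun n => Real.log (A n).det) atTop atTop ∧
    ∃ K1 : ℝ, 0 ≤ K1 ∧ ∀ᶠ n in atTop, 1 + ∑ k ∈ range (n + 1), φ k ⬝ᵥ φ k / (A (k + 1)).trace
      ≤ K1 * Real.log (A (n + 1)).det := by
  have : Nonempty (Fin d) := ⟨⟨0, hd⟩⟩
  have h0 : ∀ n, 0 < (A n).trace := fun n => (hA n).trace_pos
  obtain ⟨K, hK, hKb⟩ := aux_quadform_bound A α L hL hA hα hc
  obtain ⟨hDt, c, hcb⟩ := aux_log_det hd A α L hL hA hα hαt hc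
  have hq : ∀ (n : ℕ) (x : Fin d → ℝ), x ⬝ᵥ ((A n)⁻¹ *ᵥ x) ≤ K * (x ⬝ᵥ x / (A n).trace) := by
    intro n x
    rw [← mul_div_assoc, le_div_iff₀ (h0 n), mul_comm]
    exact hKb n x
  refine ⟨⟨K, hK, fun n => hq (n + 1) (φ n), hq⟩, hDt, 2, by norm_num, ?_⟩
  have hG : ∀ n, ∑ k ∈ range n, φ k ⬝ᵥ φ k / (A (k + 1)).trace ≤
      Real.log (A n).trace - Real.log (A 0).trace := by
    intro n
    rw [← sum_range_sub (fun n => Real.log (A n).trace)]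
    refine sum_le_sum fun k _ => ?_
    have ht := aux_path_trace hAs k
    have h1 := Real.log_le_sub_one_of_pos (div_pos (h0 k) (h0 (k + 1)))
    rw [Real.log_div (h0 k).ne' (h0 (k + 1)).ne'] at h1
    have : φ k ⬝ᵥ φ k / (A (k + 1)).trace = 1 - (A k).trace / (A (k + 1)).trace := by
      have := h0 (k + 1)
      field_simp; linarith
    rw [this]; linarith
  have hD1 : Tendsto (fun n => Real.log (A (n + 1)).det) atTop atTop :=
    (tendsto_add_atTop_iff_nat 1).2 hDt
  filter_upwards [(tendsto_add_atTop_nat 1).eventually hcb,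
    hD1.eventually_ge_atTop (1 + c - Real.log (A 0).trace)] with n h1 h2
  have := hG (n + 1)
  linarith

end path2


/-! ### measurability -/

section meas
variable {Ω : Type*} {mΩ : MeasurableSpace Ω} {d : ℕ}

lemma aux_meas_dot {x y : Ω → Fin d → ℝ} (hx : ∀ i, Measurable fun ω => x ω i)
    (hy : ∀ i, Measurable fun ω => y ω i) : Measurable fun ω => x ω ⬝ᵥ y ω := by
  simp only [dotProduct]
  exact Finset.measurable_fun_sum _ fun i _ => (hx i).mul (hy i)

lemma aux_meas_det {A : Ω → Matrix (Fin d) (Fin d) ℝ} (hA : ∀ i j, Measurable fun ω => A ω i j) :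
    Measurable fun ω => (A ω).det := by
  simp only [det_apply']
  exact Finset.measurable_fun_sum _ fun τ _ =>
    (Finset.measurable_fun_prod _ fun i _ => hA _ _).const_mul _

lemma aux_meas_inv {A : Ω → Matrix (Fin d) (Fin d) ℝ} (hA : ∀ i j, Measurable fun ω => A ω i j)
    (i j : Fin d) : Measurable fun ω => (A ω)⁻¹ i j := by
  simp only [Matrix.inv_def, Matrix.smul_apply, smul_eq_mul, Ring.inverse_eq_inv', adjugate_apply]
  refine (aux_meas_det hA).inv.mul (aux_meas_det fun k l => ?_)
  by_cases h : k = j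
  · subst h; simp only [updateRow_self]; exact measurable_const
  · simp only [updateRow_ne h]; exact hA k l

lemma aux_meas_quad {A : Ω → Matrix (Fin d) (Fin d) ℝ} (hA : ∀ i j, Measurable fun ω => A ω i j)
    {x y : Ω → Fin d → ℝ} (hx : ∀ i, Measurable fun ω => x ω i)
    (hy : ∀ i, Measurable fun ω => y ω i) : Measurable fun ω => x ω ⬝ᵥ ((A ω)⁻¹ *ᵥ y ω) :=
  aux_meas_dot hx fun i => aux_meas_dot (x := fun ω => (A ω)⁻¹ i) (aux_meas_inv hA i) hy

lemma aux_meas_trace {A : Ω → Matrix (Fin d) (Fin d) ℝ} (hA : ∀ i j, Measurable fun ω => A ω i j) :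
    Measurable fun ω => (A ω).trace := by
  simp only [trace, diag_apply]
  exact Finset.measurable_fun_sum _ fun i _ => hA i i

lemma aux_meas_R {γ W : ℕ → Ω → ℝ} {q : ℝ} {n : ℕ} (hγ : ∀ k ≤ n, Measurable (γ k))
    (hW : ∀ k ≤ n, Measurable (W k)) :
    Measurable fun ω => auxR q (fun k => γ k ω) (fun k => W k ω) n := by
  have hWq : ∀ k ≤ n, Measurable fun ω => W k ω ^ q := fun k hk => (hW k hk).pow_const q
  have hps : ∀ m ≤ n, Measurable fun ω => partialSups (fun k => W k ω ^ q) m := by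
    intro m
    induction m with
    | zero => intro h; simpa using hWq 0 h
    | succ m ih =>
      intro h
      simp only [partialSups_add_one]
      exact (ih (by omega)).sup (hWq _ h)
  simp only [auxR]
  refine ((measurable_const.add (Finset.measurable_fun_sum _ fun k hk => hγ k ?_)).add
    (hps n le_rfl)).add (Finset.measurable_fun_sum _ fun k hk => (hγ k ?_).mul (hWq k ?_)) <;>
  · rw [mem_range] at hk; omega

end meas


/-! ### assembly -/

section main
variable {Ω : Type*} {m0 : MeasurableSpace Ω} {μ : Measure Ω} [IsProbabilityMeasure μ]

lemma aux_mom_int {X : Ω → ℝ} (hX : Measurable X) {a s : ℝ} (hs : 0 < s) (hsa : s ≤ a)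
    (h : Integrable (fun ω => |X ω| ^ a) μ) : Integrable (fun ω => |X ω| ^ s) μ := by
  refine aux_integrable_of_rpow (r := a / s) ((one_le_div hs).2 hsa)
    (aux_meas_rpow hX s).aestronglyMeasurable ?_
  refine h.congr (Eventually.of_forall fun ω => ?_)
  simp only
  rw [abs_of_nonneg (Real.rpow_nonneg (abs_nonneg _) s), ← Real.rpow_mul (abs_nonneg _),
    mul_div_cancel₀ _ hs.ne']

lemma aux_mom_bd (F : Filtration ℕ m0) {ε : ℕ → Ω → ℝ} (hε : ∀ n, Measurable (ε n))
    {a s : ℝ} (hs : 0 < s) (hsa : s ≤ a)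
    (hmomint : ∀ n, Integrable (fun ω => |ε (n + 1) ω| ^ a) μ)
    (hmom : ∀ᵐ ω ∂μ, ∃ C : ℝ, ∀ n, (μ[fun ω => |ε (n + 1) ω| ^ a|F n]) ω ≤ C) :
    ∀ᵐ ω ∂μ, ∃ C : ℝ, ∀ n, (μ[fun ω => |ε (n + 1) ω| ^ s|F n]) ω ≤ C := by
  have h : ∀ n, ∀ᵐ ω ∂μ, (μ[fun ω => |ε (n + 1) ω| ^ s|F n]) ω ≤
      1 + (μ[fun ω => |ε (n + 1) ω| ^ a|F n]) ω := by
    intro n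
    have h1 : μ[fun ω => |ε (n + 1) ω| ^ s|F n] ≤ᵐ[μ]
        μ[(fun _ => (1 : ℝ)) + fun ω => |ε (n + 1) ω| ^ a|F n] := by
      refine condExp_mono (aux_mom_int (hε _) hs hsa (hmomint n))
        ((integrable_const _).add (hmomint n)) (Eventually.of_forall fun ω => ?_)
      have := aux_le_one_add_rpow (r := a / s) ((one_le_div hs).2 hsa)
        (Real.rpow_nonneg (abs_nonneg (ε (n + 1) ω)) s)
      rw [← Real.rpow_mul (abs_nonneg _), mul_div_cancel₀ _ hs.ne'] at this
      exact this
    have h2 := condExp_add (μ := μ) (integrable_const (1 : ℝ)) (hmomint n) (F n)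
    have h3 : μ[fun _ : Ω => (1 : ℝ)|F n] = fun _ => 1 := condExp_const (F.le n) 1
    filter_upwards [h1, h2] with ω e1 e2
    rw [e2, Pi.add_apply, h3] at e1
    exact e1
  filter_upwards [hmom, ae_all_iff.2 h] with ω ⟨C, hC⟩ hh
  exact ⟨1 + C, fun n => (hh n).trans (by linarith [hC n])⟩

lemma aux_main (F : Filtration ℕ m0) {d : ℕ} (hd : 0 < d)
    (ε : ℕ → Ω → ℝ) (Φ : ℕ → Ω → Fin d → ℝ)
    (L : Matrix (Fin d) (Fin d) ℝ) (hL : L.PosDef)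
    (σ : ℝ) (p : ℕ) (hp : 1 ≤ p) (a : ℝ) (ha : 2 * p < a)
    (α : ℕ → Ω → ℝ)
    (hεadapt : ∀ n, StronglyMeasurable[F n] (ε n))
    (hΦ : ∀ n i, Measurable[F n] fun ω => Φ n ω i)
    (hmds : ∀ n, μ[ε (n + 1)|F n] =ᵐ[μ] 0)
    (hvar : ∀ n, μ[fun ω => ε (n + 1) ω ^ 2|F n] =ᵐ[μ] fun _ => σ ^ 2)
    (hmomint : ∀ n, Integrable (fun ω => |ε (n + 1) ω| ^ a) μ)
    (hmom : ∀ᵐ ω ∂μ, ∃ C : ℝ, ∀ n, (μ[fun ω => |ε (n + 1) ω| ^ a|F n]) ω ≤ C)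
    (A : ℕ → Ω → Matrix (Fin d) (Fin d) ℝ) (M : ℕ → Ω → Fin d → ℝ)
    (hA : ∀ n ω, (A n ω).PosDef)
    (hAs : ∀ n ω, A (n + 1) ω = A n ω + vecMulVec (Φ n ω) (Φ n ω))
    (hM : ∀ n ω, M (n + 1) ω = M n ω + ε (n + 1) ω • Φ n ω)
    (hAm : ∀ n i j, Measurable[F n] fun ω => A n ω i j)
    (hAm' : ∀ n i j, Measurable[F n] fun ω => A (n + 1) ω i j)
    (hMm : ∀ n i, Measurable[F n] fun ω => M n ω i)
    (hf0 : ∀ᵐ ω ∂μ, Tendsto (fun n => Φ n ω ⬝ᵥ ((A (n + 1) ω)⁻¹ *ᵥ Φ n ω)) atTop (𝓝 0))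
    (hαpos : ∀ n ω, 0 < α n ω)
    (hαtop : ∀ᵐ ω ∂μ, Tendsto (fun n => α n ω) atTop atTop)
    (hconv : ∀ᵐ ω ∂μ, Tendsto (fun n => (α n ω)⁻¹ • A n ω) atTop (𝓝 L)) :
    ∀ᵐ ω ∂μ, Tendsto (fun n =>
      (Real.log ((A (n + 1) ω).det))⁻¹ * ∑ k ∈ Finset.Icc 1 n,
        (M k ω ⬝ᵥ ((A k ω)⁻¹ *ᵥ M k ω) - M k ω ⬝ᵥ ((A (k + 1) ω)⁻¹ *ᵥ M k ω)) ^ p)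
      atTop (𝓝 (if p = 1 then σ ^ 2 else 0)) := by
  -- exponents
  have hp' : (1 : ℝ) ≤ p := by exact_mod_cast hp
  obtain ⟨r, hr1, hr2, hrp⟩ : ∃ r : ℝ, 1 < r ∧ r ≤ 2 ∧ 2 * r * p < a := by
    have h1 : 1 < a / (2 * p) := by rw [one_lt_div (by positivity)]; exact ha
    refine ⟨min 2 ((1 + a / (2 * p)) / 2), lt_min (by norm_num) (by linarith), min_le_left _ _, ?_⟩
    have h2 : min 2 ((1 + a / (2 * p)) / 2) < a / (2 * p) :=
      (min_le_right _ _).trans_lt (by linarith)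
    rw [lt_div_iff₀ (by positivity)] at h2
    linarith
  set q := a / (2 * r) with hqdef
  have hr0 : 0 < r := by linarith
  have hpq : (p : ℝ) < q := by rw [hqdef, lt_div_iff₀ (by positivity)]; linarith
  have hq : 1 < q := by linarith
  have hqr : 2 * q * r = a := by rw [hqdef]; field_simp
  have ha2 : 2 < a := by linarith
  have hq2a : 2 * q ≤ a := by nlinarith
  have hr2a : 2 * r ≤ a := by nlinarith
  have hεm : ∀ n, Measurable (ε n) := fun n => ((hεadapt n).mono (F.le n)).measurable
  -- processes
  set γ : ℕ → Ω → ℝ := fun n ω => Φ n ω ⬝ᵥ Φ n ω / (A (n + 1) ω).trace with hγdef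
  set W : ℕ → Ω → ℝ := fun n ω => M n ω ⬝ᵥ M n ω / (A n ω).trace with hWdef
  set x : ℕ → Ω → ℝ := fun n ω => M n ω ⬝ᵥ Φ n ω / (A (n + 1) ω).trace with hxdef
  set b : ℕ → Ω → ℝ := fun n ω => Φ n ω ⬝ᵥ ((A (n + 1) ω)⁻¹ *ᵥ M n ω) with hbdef
  set f : ℕ → Ω → ℝ := fun n ω => Φ n ω ⬝ᵥ ((A (n + 1) ω)⁻¹ *ᵥ Φ n ω) with hfdef
  set V : ℕ → Ω → ℝ := fun n ω => M n ω ⬝ᵥ ((A n ω)⁻¹ *ᵥ M n ω) with hVdef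
  set B : ℕ → Ω → ℝ := fun n ω => V n ω - M n ω ⬝ᵥ ((A (n + 1) ω)⁻¹ *ᵥ M n ω) with hBdef
  set R : ℕ → Ω → ℝ := fun n ω => auxR q (fun k => γ k ω) (fun k => W k ω) n with hRdef
  have P1 := fun ω n => aux_path1 (A := fun n => A n ω) (φ := fun n => Φ n ω) (M := fun n => M n ω)
    hd (fun n => hA n ω) (fun n => hAs n ω) n
  have hγ0 : ∀ ω n, 0 ≤ γ n ω := fun ω n => (P1 ω n).2.1
  have hγ1 : ∀ ω n, γ n ω ≤ 1 := fun ω n => (P1 ω n).2.2.1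
  have hW0 : ∀ ω n, 0 ≤ W n ω := fun ω n => (P1 ω n).2.2.2.1
  have hx : ∀ ω n, x n ω ^ 2 ≤ (1 - γ n ω) * W n ω * γ n ω := fun ω n => (P1 ω n).2.2.2.2
  have hrec : ∀ ω n, W (n + 1) ω = (1 - γ n ω) * W n ω + 2 * (ε (n + 1) ω * x n ω)
      + ε (n + 1) ω ^ 2 * γ n ω := fun ω n =>
    aux_path_rec (A := fun n => A n ω) (φ := fun n => Φ n ω) (M := fun n => M n ω)
      (e := fun n => ε (n + 1) ω) hd (fun n => hA n ω) (fun n => hAs n ω) (fun n => hM n ω) n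
  have PL := fun ω n => aux_lin (hA n ω) (Φ n ω) (hAs n ω)
  have hf0' : ∀ ω n, 0 ≤ f n ω := fun ω n => (PL ω n).1
  have hf1 : ∀ ω n, f n ω < 1 := fun ω n => (PL ω n).2.1
  have hDrec : ∀ ω n, Real.log (A (n + 1) ω).det - Real.log (A n ω).det =
      -Real.log (1 - f n ω) := by
    intro ω n
    have h1 := (PL ω n).2.2.1
    have h2 := (hA (n + 1) ω).det_pos
    have h3 : 0 < 1 - f n ω := by linarith [hf1 ω n]
    rw [← h1, Real.log_mul h2.ne' h3.ne']; ring
  have hB0 : ∀ ω n, 0 ≤ B n ω := fun ω n => ((PL ω n).2.2.2 (M n ω)).1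
  have hbB : ∀ ω n, b n ω ^ 2 ≤ B n ω := fun ω n => ((PL ω n).2.2.2 (M n ω)).2.1
  have hBf : ∀ ω n, B n ω ≤ f n ω * V n ω := fun ω n => ((PL ω n).2.2.2 (M n ω)).2.2.1
  have hVr : ∀ ω n, V (n + 1) ω = V n ω - B n ω + 2 * (b n ω * ε (n + 1) ω)
      + f n ω * ε (n + 1) ω ^ 2 := by
    intro ω n
    have := ((PL ω n).2.2.2 (M n ω)).2.2.2 (ε (n + 1) ω)
    rw [← hM] at this
    change V (n + 1) ω = _ at this
    rw [this]
    simp only [hBdef, hbdef, hfdef]; ring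
  have hV0 : ∀ ω n, 0 ≤ V n ω := fun ω n => aux_nonneg_dot (hA n ω).inv (M n ω)
  have hRf := fun ω => auxR_facts (q := q) (hγ0 ω) (hW0 ω)
  have hU : ∀ ω n, 0 ≤ W n ω ^ q := fun ω n => Real.rpow_nonneg (hW0 ω n) q
  have hWU : ∀ ω n, W n ω ≤ 1 + W n ω ^ q := fun ω n => aux_le_one_add_rpow hq.le (hW0 ω n)
  -- asymptotic facts
  have P2 : ∀ᵐ ω ∂μ, (∃ K : ℝ, 0 ≤ K ∧ (∀ n, f n ω ≤ K * γ n ω) ∧ ∀ n, V n ω ≤ K * W n ω) ∧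
      Tendsto (fun n => Real.log (A n ω).det) atTop atTop ∧
      ∃ K1 : ℝ, 0 ≤ K1 ∧ ∀ᶠ n in atTop, 1 + ∑ k ∈ range (n + 1), γ k ω
      ≤ K1 * Real.log (A (n + 1) ω).det := by
    filter_upwards [hαtop, hconv] with ω h1 h2
    obtain ⟨⟨K, hK, k1, k2⟩, k3, k4⟩ := aux_path2 (A := fun n => A n ω) (φ := fun n => Φ n ω)
      hd (fun n => hA n ω) (fun n => hAs n ω) hL (fun n => hαpos n ω) h1 h2
    exact ⟨⟨K, hK, k1, fun n => k2 n (M n ω)⟩, k3, k4⟩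
  have hRt : ∀ᵐ ω ∂μ, Tendsto (fun n => R n ω) atTop atTop := by
    filter_upwards [hf0, P2] with ω h1 ⟨⟨K, hK, k1, k2⟩, k3, _⟩
    have h3 := aux_G_tendsto hK k1 k3 (aux_sum_f (hf0' ω) (hf1 ω) h1 (hDrec ω) k3)
    refine tendsto_atTop_mono (fun n => ?_) ((tendsto_add_atTop_iff_nat 1).2 h3)
    have := (hRf ω).2.2.2.2 n
    simp only [hRdef]
    linarith
  have hRpos : ∀ k ω, 0 < R k ω := fun k ω => by
    have := (hRf ω).2.1 k
    simp only [hRdef]; linarith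
  have hRmono : ∀ ω, Monotone fun k => R k ω := fun ω => (hRf ω).2.2.1
  -- measurability
  have hγm : ∀ n, Measurable[F n] (γ n) := fun n =>
    (aux_meas_dot (mΩ := F n) (hΦ n) (hΦ n)).div (aux_meas_trace (mΩ := F n) (hAm' n))
  have hWm : ∀ n, Measurable[F n] (W n) := fun n =>
    (aux_meas_dot (mΩ := F n) (hMm n) (hMm n)).div (aux_meas_trace (mΩ := F n) (hAm n))
  have hxm : ∀ n, Measurable[F n] (x n) := fun n =>
    (aux_meas_dot (mΩ := F n) (hMm n) (hΦ n)).div (aux_meas_trace (mΩ := F n) (hAm' n))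
  have hbm : ∀ n, Measurable[F n] (b n) := fun n =>
    aux_meas_quad (mΩ := F n) (hAm' n) (hΦ n) (hMm n)
  have hfm : ∀ n, Measurable[F n] (f n) := fun n =>
    aux_meas_quad (mΩ := F n) (hAm' n) (hΦ n) (hΦ n)
  have hRm : ∀ n, Measurable[F n] (R n) := fun n =>
    aux_meas_R (mΩ := F n) (fun k hk => (hγm k).mono (F.mono hk) le_rfl)
      (fun k hk => (hWm k).mono (F.mono hk) le_rfl)
  have hcm : ∀ n, Measurable[F n] fun ω => 2 * q * ((1 - γ n ω) * W n ω) ^ (q - 1) * x n ω :=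
    fun n => (((((hγm n).const_sub 1).mul (hWm n)).pow_const (q - 1)).const_mul (2 * q)).mul (hxm n)
  -- the four laws of large numbers
  have hint2 : ∀ k, Integrable (fun ω => |ε (k + 1) ω| ^ (2 : ℝ)) μ := fun k =>
    aux_mom_int (hεm _) (by norm_num) ha2.le (hmomint k)
  have hbd2 := aux_mom_bd F hεm (by norm_num : (0 : ℝ) < 2) ha2.le hmomint hmom
  have T1 := aux_lln F (r := 2) (by norm_num) le_rfl (fun k => ε (k + 1))
    (fun n ω => 2 * q * ((1 - γ n ω) * W n ω) ^ (q - 1) * x n ω) R (fun k => hεadapt (k + 1))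
    hint2 hbd2 hcm hRm hRpos hRmono hRt
    (Eventually.of_forall fun ω => aux_sum_c hq (hγ0 ω) (hγ1 ω) (hW0 ω) (hx ω))
  have T3 := aux_lln F (r := 2) (by norm_num) le_rfl (fun k => ε (k + 1))
    b R (fun k => hεadapt (k + 1)) hint2 hbd2 hbm hRm hRpos hRmono hRt (by
      filter_upwards [P2] with ω ⟨⟨K, hK, k1, k2⟩, _, _⟩
      refine aux_sum_generic (hγ0 ω) (hW0 ω) (C := K * K) (by norm_num) fun n => ?_
      rw [Real.rpow_two, sq_abs]
      calc b n ω ^ 2 ≤ f n ω * V n ω := (hbB ω n).trans (hBf ω n)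
        _ ≤ (K * γ n ω) * (K * W n ω) :=
          mul_le_mul (k1 n) (k2 n) (hV0 ω n) (mul_nonneg hK (hγ0 ω n))
        _ = K * K * (γ n ω * W n ω) := by ring
        _ ≤ _ := by
          refine mul_le_mul_of_nonneg_left ?_ (mul_nonneg hK hK)
          exact mul_le_mul_of_nonneg_left (hWU ω n) (hγ0 ω n))
  have e2 : ∀ (k : ℕ), (fun ω => |(ε (k + 1) ω ^ 2) ^ q| ^ r) = fun ω => |ε (k + 1) ω| ^ a := by
    intro k; funext ω
    rw [abs_of_nonneg (Real.rpow_nonneg (sq_nonneg _) q), ← sq_abs, ← Real.rpow_two,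
      ← Real.rpow_mul (abs_nonneg _), ← Real.rpow_mul (abs_nonneg _), hqr]
  have e4 : ∀ (k : ℕ), (fun ω => |ε (k + 1) ω ^ 2| ^ r) = fun ω => |ε (k + 1) ω| ^ (2 * r) := by
    intro k; funext ω
    rw [abs_of_nonneg (sq_nonneg _), ← sq_abs, ← Real.rpow_two, ← Real.rpow_mul (abs_nonneg _)]
  have e5 : ∀ (k : ℕ), (fun ω => (ε (k + 1) ω ^ 2) ^ q) = fun ω => |ε (k + 1) ω| ^ (2 * q) := by
    intro k; funext ω
    rw [← sq_abs, ← Real.rpow_two, ← Real.rpow_mul (abs_nonneg _)]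
  have hε2m : ∀ k, Measurable[F (k + 1)] fun ω => ε (k + 1) ω ^ 2 := fun k =>
    (hεadapt (k + 1)).measurable.pow_const 2
  have hγr : ∀ ω n, γ n ω ≤ γ n ω * (1 + W n ω ^ q) := fun ω n => by
    nlinarith [hγ0 ω n, hU ω n]
  have T2 := aux_lln F hr1 hr2 (fun k ω => (ε (k + 1) ω ^ 2) ^ q) γ R
    (fun k => ((hε2m k).pow_const q).stronglyMeasurable)
    (fun k => by rw [e2]; exact hmomint k) (by simp only [e2]; exact hmom)
    hγm hRm hRpos hRmono hRt
    (Eventually.of_forall fun ω => aux_sum_generic (hγ0 ω) (hW0 ω) (C := 1) hr1 fun n => by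
      rw [abs_of_nonneg (hγ0 ω n), one_mul]
      refine le_trans ?_ (hγr ω n)
      exact Real.rpow_le_self_of_le_one (hγ0 ω n) (hγ1 ω n) hr1.le)
  have T4 := aux_lln F hr1 hr2 (fun k ω => ε (k + 1) ω ^ 2) f R
    (fun k => (hε2m k).stronglyMeasurable)
    (fun k => by rw [e4]; exact aux_mom_int (hεm _) (by linarith) hr2a (hmomint k))
    (by simp only [e4]; exact aux_mom_bd F hεm (by linarith) hr2a hmomint hmom)
    hfm hRm hRpos hRmono hRt (by
      filter_upwards [P2] with ω ⟨⟨K, hK, k1, k2⟩, _, _⟩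
      refine aux_sum_generic (hγ0 ω) (hW0 ω) (C := K) hr1 fun n => ?_
      rw [abs_of_nonneg (hf0' ω n)]
      refine (Real.rpow_le_self_of_le_one (hf0' ω n) (hf1 ω n).le hr1.le).trans ((k1 n).trans ?_)
      exact mul_le_mul_of_nonneg_left (hγr ω n) hK)
  have hm := aux_mom_bd F hεm (by linarith : 0 < 2 * q) hq2a hmomint hmom
  simp only [← e5] at hm
  -- conclusion
  filter_upwards [T1, T2, T3, T4, hm, P2, hf0, ae_all_iff.2 hmds, ae_all_iff.2 hvar] with ω
    t1 t2 t3 t4 ⟨Cm, hCm⟩ ⟨⟨K, hK, k1, k2⟩, hDt, K1, hK1, hG⟩ hft hmd hva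
  simp only [hmd, Pi.zero_apply, sub_zero] at t1 t3
  simp only [hva] at t4
  obtain ⟨K2, hK2, hR2⟩ := aux_growth (e := fun n => ε (n + 1) ω) hq (hγ0 ω) (hγ1 ω) (hW0 ω)
    (hx ω) (hrec ω) hCm t1 t2
  have hD1t : Tendsto (fun n => Real.log (A (n + 1) ω).det) atTop atTop :=
    (tendsto_add_atTop_iff_nat 1).2 hDt
  refine aux_final (D := fun n => Real.log (A n ω).det) (e := fun n => ε (n + 1) ω)
    (K1 := K2 * (K1 + 1)) hp hq hpq.le (hf0' ω) (hf1 ω) hft (hDrec ω) hDt (hγ0 ω) (hW0 ω)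
    hK k1 (hV0 ω) k2 (hB0 ω) (hBf ω) (hVr ω) ?_ ?_ t3 t4
  · filter_upwards [hG, hD1t.eventually_ge_atTop 1] with n h1 h2
    refine (hR2 n).trans ?_
    rw [mul_assoc]
    refine mul_le_mul_of_nonneg_left ?_ hK2
    linarith
  · filter_upwards [hG, hD1t.eventually_ge_atTop 1] with n h1 h2
    refine (hR2 (n + 1)).trans ?_
    rw [mul_assoc]
    refine mul_le_mul_of_nonneg_left ?_ hK2
    rw [sum_range_succ]
    linarith [hγ1 ω (n + 1)]

end main

lemma aux_thm_meas {Ω : Type*} {m0 : MeasurableSpace Ω} (F : Filtration ℕ m0) {d : ℕ}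
    {Φ : ℕ → Ω → Fin d → ℝ} (hΦ : ∀ n, StronglyMeasurable[F n] (Φ n))
    (S : Matrix (Fin d) (Fin d) ℝ) {m n : ℕ} (hmn : m ≤ n + 1) (i j : Fin d) :
    Measurable[F n] fun ω => (S + ∑ k ∈ Finset.range m, vecMulVec (Φ k ω) (Φ k ω)) i j := by
  simp only [Matrix.add_apply, Matrix.sum_apply, vecMulVec_apply]
  refine Measurable.const_add (m := F n) (Finset.measurable_fun_sum (m := F n) _ fun k hk => ?_) _
  have hk' := Finset.mem_range.1 hk
  have h : ∀ i, Measurable[F n] fun ω => Φ k ω i := fun i =>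
    ((measurable_pi_apply i).comp (hΦ k).measurable).mono (F.mono (by omega)) le_rfl
  exact (h i).mul (h j)


/-- **Theorem 2, first part**: convergence of the even moments in the ASCLT for
vector martingale transforms. -/
theorem asclt_increments_corollary
    {Ω : Type*} {m0 : MeasurableSpace Ω} {μ : Measure Ω} [IsProbabilityMeasure μ]
    (F : Filtration ℕ m0) {d : ℕ} (hd : 0 < d)
    (ε : ℕ → Ω → ℝ) (Φ : ℕ → Ω → Fin d → ℝ) (M0 : Ω → Fin d → ℝ)
    (S L : Matrix (Fin d) (Fin d) ℝ) (hS : S.PosDef) (hL : L.PosDef)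
    (σ : ℝ) (p : ℕ) (hp : 1 ≤ p) (a : ℝ) (ha : 2 * p < a)
    (α : ℕ → Ω → ℝ)
    (hεadapt : ∀ n, StronglyMeasurable[F n] (ε n))
    (hεint : ∀ n, Integrable (ε n) μ)
    (hΦadapt : ∀ n, StronglyMeasurable[F n] (Φ n))
    (hM0 : StronglyMeasurable[F 0] M0)
    (hmds : ∀ n, μ[ε (n + 1)|F n] =ᵐ[μ] 0)
    (hvar : ∀ n, μ[fun ω => ε (n + 1) ω ^ 2|F n] =ᵐ[μ] fun _ => σ ^ 2)
    (hmomint : ∀ n, Integrable (fun ω => |ε (n + 1) ω| ^ a) μ)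
    (hmom : ∀ᵐ ω ∂μ, ∃ C : ℝ, ∀ n, (μ[fun ω => |ε (n + 1) ω| ^ a|F n]) ω ≤ C)
    (hf0 : ∀ᵐ ω ∂μ, Tendsto (fun n => expl S Φ n ω) atTop (𝓝 0))
    (hαmeas : ∀ n, Measurable (α n))
    (hαpos : ∀ n ω, 0 < α n ω)
    (hαmono : ∀ᵐ ω ∂μ, Monotone fun n => α n ω)
    (hαtop : ∀ᵐ ω ∂μ, Tendsto (fun n => α n ω) atTop atTop)
    (hconv : ∀ᵐ ω ∂μ, Tendsto (fun n => (α n ω)⁻¹ • Smat S Φ n ω) atTop (𝓝 L)) :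
    let aseq : ℕ → Ω → ℝ := fun n ω =>
      Mart M0 Φ ε n ω ⬝ᵥ ((Smat S Φ (n - 1) ω)⁻¹ *ᵥ Mart M0 Φ ε n ω) -
        Mart M0 Φ ε n ω ⬝ᵥ ((Smat S Φ n ω)⁻¹ *ᵥ Mart M0 Φ ε n ω)
    ∀ᵐ ω ∂μ, Tendsto (fun n =>
      (Real.log ((Smat S Φ n ω).det))⁻¹ * ∑ k ∈ Finset.Icc 1 n, aseq k ω ^ p)
      atTop (𝓝 (if p = 1 then σ ^ 2 else 0)) := by
  intro aseq
  have key := aux_main (μ := μ) F hd ε Φ L hL σ p hp a ha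
    (fun n ω => if n = 0 then 1 else α (n - 1) ω) hεadapt
    (fun n i => (measurable_pi_apply i).comp (hΦadapt n).measurable) hmds hvar hmomint hmom
    (fun n ω => S + ∑ k ∈ Finset.range n, vecMulVec (Φ k ω) (Φ k ω)) (fun n ω => Mart M0 Φ ε n ω)
    ?_ ?_ ?_ ?_ ?_ ?_ hf0 ?_ ?_ ?_
  · filter_upwards [key] with ω hω
    refine hω.congr fun n => ?_
    refine congrArg₂ (· * ·) rfl (Finset.sum_congr rfl fun k hk => ?_)
    obtain ⟨j, rfl⟩ : ∃ j, k = j + 1 := ⟨k - 1, by have := (Finset.mem_Icc.1 hk).1; omega⟩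
    rfl
  · intro n ω
    induction n with
    | zero => simpa using hS
    | succ n ih =>
      simp only [Finset.sum_range_succ, ← add_assoc]
      exact aux_posdef_step ih _
  · intro n ω
    simp only [Finset.sum_range_succ, ← add_assoc]
  · intro n ω
    simp only [Mart, Finset.sum_range_succ, ← add_assoc]
  · intro n i j
    exact aux_thm_meas F hΦadapt S (m := n) (n := n) (by omega) i j
  · intro n i j
    exact aux_thm_meas F hΦadapt S (m := n + 1) (n := n) (by omega) i j
  · intro n i
    simp only [Mart, Pi.add_apply, Finset.sum_apply, Pi.smul_apply, smul_eq_mul]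
    refine Measurable.add (m := F n) ?_ (Finset.measurable_fun_sum (m := F n) _ fun k hk => ?_)
    · exact ((measurable_pi_apply i).comp hM0.measurable).mono (F.mono (Nat.zero_le n)) le_rfl
    · have hk' := Finset.mem_range.1 hk
      exact ((hεadapt (k + 1)).measurable.mono (F.mono (by omega)) le_rfl).mul
        (((measurable_pi_apply i).comp (hΦadapt k).measurable).mono (F.mono (by omega)) le_rfl)
  · intro n ω
    split_ifs
    · exact one_pos
    · exact hαpos _ _
  · filter_upwards [hαtop] with ω h
    refine (tendsto_add_atTop_iff_nat 1).1 ?_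
    simpa using h
  · filter_upwards [hconv] with ω h
    refine (tendsto_add_atTop_iff_nat 1).1 ?_
    simpa [Smat] using h
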